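/- Let S be a quasi-hereditary algebra and λ ∈ Λ⁺. The least length d of a tilting resolution of the costandard module ∇(λ), i.e. of an exact sequence 0 → T_d → ⋯ → T_1 → T_0 → ∇(λ) → 0 with every T_i a tilting module, equals the Δ-filtration dimension wfd(∇(λ)). -/

import Mathlib

/-!
Common definitions for formalizing "On the global and ∇-filtration dimensions of
quasi-hereditary algebras" by Erdmann and Parker.

We work with a finite-dimensional algebra `S` over a field `k`; since `S` is
finite dimensional over `k`, the finite-dimensional `S`-modules are exactly the
finitely generated ones, so we express finite-dimensionality of a module `M` as
`Module.Finite S M`.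
-/

open CategoryTheory

namespace QHPaper

variable (S : Type) [Ring S]

/-- The subquotient `B ⧸ A` associated to two submodules `A B` of `M`. -/
abbrev subquot {M : ModuleCat.{0} S} (A B : Submodule S ↥M) : Type :=
  ↥B ⧸ (Submodule.comap B.subtype A)

/-- A filtration `⊥ = f 0 ≤ f 1 ≤ ⋯ ≤ f n = ⊤` of `M` whose `i`-th section
`f (i+1) / f i` is isomorphic to the prescribed module `D i`. -/
def HasFiltrationWithSections (M : ModuleCat.{0} S) (n : ℕ)
    (f : Fin (n + 1) → Submodule S ↥M) (D : Fin n → ModuleCat.{0} S) : Prop :=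
  Monotone f ∧ f 0 = ⊥ ∧ f (Fin.last n) = ⊤ ∧
    ∀ i : Fin n, Nonempty ((subquot S (f i.castSucc) (f i.succ)) ≃ₗ[S] ↥(D i))

/-- `L` occurs as a (simple) subquotient of `M`; for `L` simple this says that `L`
is a composition factor of `M`. -/
def IsCompFactor (L M : ModuleCat.{0} S) : Prop :=
  ∃ (A B : Submodule S ↥M), A ≤ B ∧ Nonempty ((subquot S A B) ≃ₗ[S] ↥L)

/-- `L` occurs with multiplicity `m` among the sections of a composition series of `M`. -/
def CompFactorMult (L M : ModuleCat.{0} S) (m : ℕ) : Prop :=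
  ∃ (n : ℕ) (f : Fin (n + 1) → Submodule S ↥M),
    Monotone f ∧ f 0 = ⊥ ∧ f (Fin.last n) = ⊤ ∧
    (∀ i : Fin n, IsSimpleModule S (subquot S (f i.castSucc) (f i.succ))) ∧
    Nat.card {i : Fin n // Nonempty ((subquot S (f i.castSucc) (f i.succ)) ≃ₗ[S] ↥L)} = m

/-- `P` is a projective cover of `M`: `P` is projective and there is a surjection
`P → M` whose kernel is superfluous in `P`. -/
def IsProjCover (P M : ModuleCat.{0} S) : Prop :=
  Module.Projective S ↥P ∧ ∃ π : ↥P →ₗ[S] ↥M, Function.Surjective π ∧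
    ∀ N : Submodule S ↥P, N ⊔ LinearMap.ker π = ⊤ → N = ⊤

/-- `I` is an injective hull of `M`: `I` is injective and there is an injection
`M → I` with essential image. -/
def IsInjHull (I M : ModuleCat.{0} S) : Prop :=
  Module.Injective S ↥I ∧ ∃ ι : ↥M →ₗ[S] ↥I, Function.Injective ι ∧
    ∀ N : Submodule S ↥I, N ⊓ LinearMap.range ι = ⊥ → N = ⊥

/-- The data of a quasi-hereditary algebra structure on `S` with weight poset `Λ`:
a full set `L` of pairwise non-isomorphic simple modules, their projective covers `P`
and injective hulls `I`, the standard modules `std` (largest quotient of `P lam` with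
all composition factors `L mu`, `mu ≤ lam`), the costandard modules `costd`
(largest submodule of `I lam` with all composition factors `L mu`, `mu ≤ lam`),
such that `L lam` occurs exactly once in `std lam` and `P lam` is filtered by
standard modules `std mu` with `mu ≥ lam`, with `std lam` occurring exactly once. -/
structure QHData (Λ : Type) [Fintype Λ] [PartialOrder Λ] where
  L : Λ → ModuleCat.{0} S
  P : Λ → ModuleCat.{0} S
  I : Λ → ModuleCat.{0} S
  std : Λ → ModuleCat.{0} S
  costd : Λ → ModuleCat.{0} S
  finiteL : ∀ lam, Module.Finite S ↥(L lam)
  simpleL : ∀ lam, IsSimpleModule S ↥(L lam)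
  nonisoL : ∀ lam mu, lam ≠ mu → IsEmpty (↥(L lam) ≃ₗ[S] ↥(L mu))
  fullL : ∀ M : ModuleCat.{0} S, IsSimpleModule S ↥M → ∃ lam, Nonempty (↥M ≃ₗ[S] ↥(L lam))
  projCover : ∀ lam, IsProjCover S (P lam) (L lam)
  injHull : ∀ lam, IsInjHull S (I lam) (L lam)
  stdSpec : ∀ lam, ∃ K : Submodule S ↥(P lam),
    Nonempty (↥(std lam) ≃ₗ[S] (↥(P lam) ⧸ K)) ∧
    (∀ mu, IsCompFactor S (L mu) (ModuleCat.of S (↥(P lam) ⧸ K)) → mu ≤ lam) ∧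
    ∀ K' : Submodule S ↥(P lam),
      (∀ mu, IsCompFactor S (L mu) (ModuleCat.of S (↥(P lam) ⧸ K')) → mu ≤ lam) → K ≤ K'
  costdSpec : ∀ lam, ∃ V : Submodule S ↥(I lam),
    Nonempty (↥(costd lam) ≃ₗ[S] ↥V) ∧
    (∀ mu, IsCompFactor S (L mu) (ModuleCat.of S ↥V) → mu ≤ lam) ∧
    ∀ V' : Submodule S ↥(I lam),
      (∀ mu, IsCompFactor S (L mu) (ModuleCat.of S ↥V') → mu ≤ lam) → V' ≤ V
  multOne : ∀ lam, CompFactorMult S (L lam) (std lam) 1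
  projFilt : ∀ lam, ∃ (n : ℕ) (f : Fin (n + 1) → Submodule S ↥(P lam)) (g : Fin n → Λ),
    HasFiltrationWithSections S (P lam) n f (fun i => std (g i)) ∧
    (∀ i, lam ≤ g i) ∧ Nat.card {i : Fin n // g i = lam} = 1

variable {Λ : Type} [Fintype Λ] [PartialOrder Λ]

/-- `M` has a filtration with costandard sections, i.e. `M ∈ F(∇)`. -/
def InCostdFilt (Q : QHData S Λ) (M : ModuleCat.{0} S) : Prop :=
  ∃ (n : ℕ) (f : Fin (n + 1) → Submodule S ↥M) (g : Fin n → Λ),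
    HasFiltrationWithSections S M n f (fun i => Q.costd (g i))

/-- `M` has a filtration with standard sections, i.e. `M ∈ F(Δ)`. -/
def InStdFilt (Q : QHData S Λ) (M : ModuleCat.{0} S) : Prop :=
  ∃ (n : ℕ) (f : Fin (n + 1) → Submodule S ↥M) (g : Fin n → Λ),
    HasFiltrationWithSections S M n f (fun i => Q.std (g i))

/-- `0 → N 0 → N 1 → ⋯ → N (n+1) → 0` is exact. -/
def IsExactSeq (n : ℕ) (N : Fin (n + 2) → ModuleCat.{0} S)
    (f : ∀ i : Fin (n + 1), ↥(N i.castSucc) →ₗ[S] ↥(N i.succ)) : Prop :=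
  Function.Injective (f 0) ∧ Function.Surjective (f (Fin.last n)) ∧
    ∀ i : Fin n, LinearMap.range (f i.castSucc) = LinearMap.ker (f i.succ)

/-- `M` has a ∇-resolution (co-resolution by modules in `F(∇)`) of length `d`:
`0 → M → M₀ → ⋯ → M_d → 0` with each `Mᵢ ∈ F(∇)`. -/
def GfdLE (Q : QHData S Λ) (M : ModuleCat.{0} S) (d : ℕ) : Prop :=
  ∃ (N : Fin (d + 2) → ModuleCat.{0} S)
    (f : ∀ i : Fin (d + 1), ↥(N i.castSucc) →ₗ[S] ↥(N i.succ)),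
    IsExactSeq S d N f ∧ N 0 = M ∧ ∀ i : Fin (d + 1), InCostdFilt S Q (N i.succ)

/-- The ∇-filtration dimension (good filtration dimension) of a module. -/
noncomputable def gfd (Q : QHData S Λ) (M : ModuleCat.{0} S) : ℕ :=
  sInf {d | GfdLE S Q M d}

/-- `M` has a resolution `0 → M_d → ⋯ → M₀ → M → 0` with each `Mᵢ ∈ F(Δ)`. -/
def WfdLE (Q : QHData S Λ) (M : ModuleCat.{0} S) (d : ℕ) : Prop :=
  ∃ (N : Fin (d + 2) → ModuleCat.{0} S)
    (f : ∀ i : Fin (d + 1), ↥(N i.castSucc) →ₗ[S] ↥(N i.succ)),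
    IsExactSeq S d N f ∧ N (Fin.last (d + 1)) = M ∧
    ∀ i : Fin (d + 1), InStdFilt S Q (N i.castSucc)

/-- The Δ-filtration dimension of a module. -/
noncomputable def wfd (Q : QHData S Λ) (M : ModuleCat.{0} S) : ℕ :=
  sInf {d | WfdLE S Q M d}

/-- `M` has a projective resolution of length `d`. -/
def ProjdimLE (M : ModuleCat.{0} S) (d : ℕ) : Prop :=
  ∃ (N : Fin (d + 2) → ModuleCat.{0} S)
    (f : ∀ i : Fin (d + 1), ↥(N i.castSucc) →ₗ[S] ↥(N i.succ)),
    IsExactSeq S d N f ∧ N (Fin.last (d + 1)) = M ∧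
    ∀ i : Fin (d + 1), Module.Projective S ↥(N i.castSucc)

/-- The projective dimension of a module. -/
noncomputable def projdim (M : ModuleCat.{0} S) : ℕ :=
  sInf {d | ProjdimLE S M d}

/-- `M` has an injective resolution of length `d`. -/
def InjdimLE (M : ModuleCat.{0} S) (d : ℕ) : Prop :=
  ∃ (N : Fin (d + 2) → ModuleCat.{0} S)
    (f : ∀ i : Fin (d + 1), ↥(N i.castSucc) →ₗ[S] ↥(N i.succ)),
    IsExactSeq S d N f ∧ N 0 = M ∧
    ∀ i : Fin (d + 1), Module.Injective S ↥(N i.succ)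

/-- The injective dimension of a module. -/
noncomputable def injdim (M : ModuleCat.{0} S) : ℕ :=
  sInf {d | InjdimLE S M d}

/-- `gfd(S)`: the supremum of the ∇-filtration dimensions of all
finite-dimensional `S`-modules. -/
noncomputable def gfdAlg (Q : QHData S Λ) : ℕ :=
  sSup {d | ∃ M : ModuleCat.{0} S, Module.Finite S ↥M ∧ gfd S Q M = d}

/-- `wfd(S)`: the supremum of the Δ-filtration dimensions of all
finite-dimensional `S`-modules. -/
noncomputable def wfdAlg (Q : QHData S Λ) : ℕ :=
  sSup {d | ∃ M : ModuleCat.{0} S, Module.Finite S ↥M ∧ wfd S Q M = d}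

/-- The global dimension of `S`: the supremum of the projective dimensions of all
finite-dimensional `S`-modules. -/
noncomputable def globdim : ℕ :=
  sSup {d | ∃ M : ModuleCat.{0} S, Module.Finite S ↥M ∧ projdim S M = d}

/-- `Ext^n_S(A, B) ≠ 0`. -/
noncomputable def extNe (A B : ModuleCat.{0} S) (n : ℕ) : Prop :=
  Nontrivial ↥(((Ext ℤ (ModuleCat.{0} S) n).obj (Opposite.op A)).obj B)

/-- A simple-preserving duality on `S`: a contravariant, exact, fully faithful,
additive self-functor `D` on the category of finite-dimensional `S`-modules with
`D (D M) ≅ M` and `D (L lam) ≅ L lam` for all `lam`. -/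
structure Duality (Q : QHData S Λ) where
  D : ModuleCat.{0} S → ModuleCat.{0} S
  Dmap : ∀ {A B : ModuleCat.{0} S}, (↥A →ₗ[S] ↥B) → (↥(D B) →ₗ[S] ↥(D A))
  finD : ∀ M : ModuleCat.{0} S, Module.Finite S ↥M → Module.Finite S ↥(D M)
  Did : ∀ A : ModuleCat.{0} S, Module.Finite S ↥A →
    Dmap (LinearMap.id : ↥A →ₗ[S] ↥A) = LinearMap.id
  Dcomp : ∀ {A B C : ModuleCat.{0} S}, Module.Finite S ↥A → Module.Finite S ↥B →
    Module.Finite S ↥C → ∀ (f : ↥A →ₗ[S] ↥B) (g : ↥B →ₗ[S] ↥C),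
      Dmap (g ∘ₗ f) = Dmap f ∘ₗ Dmap g
  Dadd : ∀ {A B : ModuleCat.{0} S}, Module.Finite S ↥A → Module.Finite S ↥B →
    ∀ (f g : ↥A →ₗ[S] ↥B), Dmap (f + g) = Dmap f + Dmap g
  Dfull : ∀ {A B : ModuleCat.{0} S}, Module.Finite S ↥A → Module.Finite S ↥B →
    Function.Bijective (fun f : ↥A →ₗ[S] ↥B => Dmap f)
  Dexact : ∀ {A B C : ModuleCat.{0} S}, Module.Finite S ↥A → Module.Finite S ↥B →
    Module.Finite S ↥C → ∀ (f : ↥A →ₗ[S] ↥B) (g : ↥B →ₗ[S] ↥C),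
      Function.Injective f → Function.Surjective g →
      LinearMap.range f = LinearMap.ker g →
      Function.Injective (Dmap g) ∧ Function.Surjective (Dmap f) ∧
        LinearMap.range (Dmap g) = LinearMap.ker (Dmap f)
  Dinvol : ∀ M : ModuleCat.{0} S, Module.Finite S ↥M → Nonempty (↥(D (D M)) ≃ₗ[S] ↥M)
  DL : ∀ lam, Nonempty (↥(D (Q.L lam)) ≃ₗ[S] ↥(Q.L lam))

/-- Strong property A: `mu < lam` implies `gfd (L mu) < gfd (L lam)`. -/
def StrongPropA (Q : QHData S Λ) : Prop :=
  ∀ mu lam : Λ, mu < lam → gfd S Q (Q.L mu) < gfd S Q (Q.L lam)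

/-- Property A: `mu < lam` implies `gfd (L mu) ≤ gfd (L lam)`. -/
def PropA (Q : QHData S Λ) : Prop :=
  ∀ mu lam : Λ, mu < lam → gfd S Q (Q.L mu) ≤ gfd S Q (Q.L lam)

/-- Property B: `mu < lam` implies `wfd (∇ mu) ≤ wfd (∇ lam)`. -/
def PropB (Q : QHData S Λ) : Prop :=
  ∀ mu lam : Λ, mu < lam → wfd S Q (Q.costd mu) ≤ wfd S Q (Q.costd lam)

/-- Property C: `wfd (∇ lam) = gfd S - inj (∇ lam)` for all `lam`. -/
def PropC (Q : QHData S Λ) : Prop :=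
  ∀ lam : Λ, wfd S Q (Q.costd lam) = gfdAlg S Q - injdim S (Q.costd lam)

/-- Property D: `wfd (∇ lam) = wfd (L lam)` for all `lam`. -/
def PropD (Q : QHData S Λ) : Prop :=
  ∀ lam : Λ, wfd S Q (Q.costd lam) = wfd S Q (Q.L lam)

/-- Property E: `mu < lam` implies `inj (∇ mu) ≥ inj (∇ lam)`. -/
def PropE (Q : QHData S Λ) : Prop :=
  ∀ mu lam : Λ, mu < lam → injdim S (Q.costd lam) ≤ injdim S (Q.costd mu)

/-- The partial order is minimal for the quasi-hereditary structure: whenever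
`mu < lam` are adjacent, `L mu` is a composition factor of `Δ lam` or of `∇ lam`. -/
def MinimalOrder (Q : QHData S Λ) : Prop :=
  ∀ mu lam : Λ, mu < lam → (¬ ∃ nu, mu < nu ∧ nu < lam) →
    IsCompFactor S (Q.L mu) (Q.std lam) ∨ IsCompFactor S (Q.L mu) (Q.costd lam)

/-- `S` is connected (indecomposable as an algebra, i.e. one block): the only
central idempotents are `0` and `1`. -/
def ConnectedRing : Prop :=
  ∀ c : S, c * c = c → (∀ s : S, c * s = s * c) → c = 0 ∨ c = 1

/-- A tilting module: a module in `F(Δ) ∩ F(∇)`. -/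
def IsTilting (Q : QHData S Λ) (T : ModuleCat.{0} S) : Prop :=
  InStdFilt S Q T ∧ InCostdFilt S Q T

/-- The indecomposable tilting module `T(lam)`: an indecomposable tilting module in
which `L lam` occurs exactly once and all other composition factors `L mu` have
`mu < lam`. -/
def IsIndecTilting (Q : QHData S Λ) (lam : Λ) (T : ModuleCat.{0} S) : Prop :=
  IsTilting S Q T ∧ Nontrivial ↥T ∧
    (∀ A B : Submodule S ↥T, IsCompl A B → A = ⊥ ∨ B = ⊥) ∧
    CompFactorMult S (Q.L lam) T 1 ∧
    ∀ mu, IsCompFactor S (Q.L mu) T → mu = lam ∨ mu < lam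

/-- A full tilting module: a (finite-dimensional) tilting module having every
indecomposable tilting module as a direct summand. -/
def IsFullTilting (Q : QHData S Λ) (T : ModuleCat.{0} S) : Prop :=
  IsTilting S Q T ∧ Module.Finite S ↥T ∧
    ∀ (lam : Λ) (Tl : ModuleCat.{0} S), IsIndecTilting S Q lam Tl →
      ∃ Cc : ModuleCat.{0} S, Nonempty (↥T ≃ₗ[S] (↥Tl × ↥Cc))

/-- The Ringel dual ring `S' = End_S(T)^op`. -/
abbrev RingelDualRing (T : ModuleCat.{0} S) : Type := (Module.End S ↥T)ᵐᵒᵖ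

/-- `Hom_S(T, X)` is a module over `S' = End_S(T)^op` via `f • φ = φ ∘ f`. -/
instance homTModule (T X : ModuleCat.{0} S) :
    Module (RingelDualRing S T) (↥T →ₗ[S] ↥X) where
  smul a φ := φ ∘ₗ a.unop
  one_smul φ := rfl
  mul_smul a b φ := rfl
  smul_zero a := rfl
  smul_add a φ ψ := rfl
  add_smul a b φ := by
    ext x
    show φ ((a.unop + b.unop) x) = φ (a.unop x) + φ (b.unop x)
    rw [LinearMap.add_apply, map_add]
  zero_smul φ := by
    ext x
    show φ ((0 : Module.End S ↥T) x) = 0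
    rw [LinearMap.zero_apply, map_zero]

/-- The `S'`-module `Hom_S(T, X)`, i.e. the image of `X` under the functor
`F = Hom_S(T, -)`. -/
noncomputable def homTMod (T X : ModuleCat.{0} S) :
    ModuleCat.{0} (RingelDualRing S T) :=
  ModuleCat.of (RingelDualRing S T) (↥T →ₗ[S] ↥X)

/-- `Q'` is a Ringel dual quasi-hereditary structure for `(Q, T)`:
`T` is a full tilting module, `Q'` is a quasi-hereditary structure on
`S' = End_S(T)^op` for the opposite poset, and its standard modules are
`Δ'(lam) = Hom_S(T, ∇(lam))`. -/
def IsRingelDualData (Q : QHData S Λ) (T : ModuleCat.{0} S)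
    (Q' : QHData (RingelDualRing S T) Λᵒᵈ) : Prop :=
  IsFullTilting S Q T ∧
    ∀ lam : Λ, Nonempty
      (↥(Q'.std (OrderDual.toDual lam)) ≃ₗ[RingelDualRing S T]
        (↥T →ₗ[S] ↥(Q.costd lam)))

/-- `0 → T_d → ⋯ → T_0 → M → 0` exact with all `T_i` tilting modules. -/
def TiltResLE (Q : QHData S Λ) (M : ModuleCat.{0} S) (d : ℕ) : Prop :=
  ∃ (N : Fin (d + 2) → ModuleCat.{0} S)
    (f : ∀ i : Fin (d + 1), ↥(N i.castSucc) →ₗ[S] ↥(N i.succ)),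
    IsExactSeq S d N f ∧ N (Fin.last (d + 1)) = M ∧
    ∀ i : Fin (d + 1), IsTilting S Q (N i.castSucc)

/-- An idempotent `e` is primitive if it is nonzero and is not the sum of two
nonzero orthogonal idempotents. -/
def IsPrimitiveIdempotent (e : S) : Prop :=
  e * e = e ∧ e ≠ 0 ∧ ∀ a b : S, a * a = a → b * b = b → a * b = 0 → b * a = 0 →
    e = a + b → a = 0 ∨ b = 0

/-- The additive subgroup `e•M = {m | e • m = m}` of `M` (for `e` idempotent). -/
def cornerSet (eG : S) (M : ModuleCat.{0} S) : AddSubgroup ↥M where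
  carrier := {m | eG • m = m}
  add_mem' := by
    intro a b ha hb
    simp only [Set.mem_setOf_eq] at *
    rw [smul_add, ha, hb]
  zero_mem' := by
    simp only [Set.mem_setOf_eq]
    rw [smul_zero]
  neg_mem' := by
    intro a ha
    simp only [Set.mem_setOf_eq] at *
    rw [smul_neg, ha]

/-- The `R`-module structure on `e•M`, where `ι : R → S` identifies `R` with the
corner ring `eSe` (as a non-unital ring, with `ι 1 = e`). -/
def cornerModuleStructure (R : Type) [Ring R] (ι : R →ₙ+* S) (eG : S)
    (hone : ι 1 = eG) (hrange : ∀ r : R, eG * ι r * eG = ι r)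
    (M : ModuleCat.{0} S) : Module R ↥(cornerSet S eG M) where
  smul r m := ⟨ι r • (m : ↥M), by
    have hm : eG • (m : ↥M) = (m : ↥M) := m.2
    show eG • (ι r • (m : ↥M)) = ι r • (m : ↥M)
    have h : eG • (ι r • (m : ↥M)) = (eG * ι r * eG) • (m : ↥M) := by
      rw [mul_assoc, mul_smul, mul_smul, hm]
    rw [h, hrange]⟩
  one_smul m := by
    apply Subtype.ext
    show ι 1 • (m : ↥M) = (m : ↥M)
    rw [hone]
    exact m.2
  mul_smul r s m := by
    apply Subtype.ext
    show ι (r * s) • (m : ↥M) = ι r • (ι s • (m : ↥M))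
    rw [map_mul, mul_smul]
  smul_zero r := by
    apply Subtype.ext
    show ι r • (0 : ↥M) = 0
    rw [smul_zero]
  smul_add r m n := by
    apply Subtype.ext
    show ι r • ((m : ↥M) + (n : ↥M)) = ι r • (m : ↥M) + ι r • (n : ↥M)
    rw [smul_add]
  add_smul r s m := by
    apply Subtype.ext
    show ι (r + s) • (m : ↥M) = ι r • (m : ↥M) + ι s • (m : ↥M)
    rw [map_add, add_smul]
  zero_smul m := by
    apply Subtype.ext
    show ι 0 • (m : ↥M) = 0
    rw [map_zero, zero_smul]

/-- The `R`-module `e•M`, where `R ≅ eSe` via `ι`. -/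
noncomputable def cornerMod (R : Type) [Ring R] (ι : R →ₙ+* S) (eG : S)
    (hone : ι 1 = eG) (hrange : ∀ r : R, eG * ι r * eG = ι r)
    (M : ModuleCat.{0} S) : ModuleCat.{0} R :=
  @ModuleCat.of R _ ↥(cornerSet S eG M) _
    (cornerModuleStructure S R ι eG hone hrange M)

end QHPaper

/-!
A tilting resolution is in particular a `Δ`-resolution, so the point is to turn a `Δ`-resolution of
a module `M ∈ F(∇)` into a tilting resolution of the same length. Every `X ∈ F(Δ)` embeds into a
tilting module with cokernel in `F(Δ)`: form universal extensions by the `Δ(λ)`, `λ` decreasing,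
until all `Ext¹(Δ(λ), -)` vanish, a property which characterises `F(∇)`. Pushing out along such
embeddings (the Auslander–Buchweitz argument) embeds a module `B` with a `Δ`-resolution of length
`d` into some `B'` with a tilting resolution of length `d`, again with cokernel in `F(Δ)`. If
`0 → B → A → M → 0` starts a `Δ`-resolution of `M`, the pushout `E` of `A` and `B'` over `B` lies in
`F(Δ)`, being an extension of `B'/B` by `A`, and in `F(∇)`, being an extension of `M` by `B'`.
Hence `0 → B' → E → M → 0` is the start of a tilting resolution. A finite `Δ`-resolution exists
because every module has finite projective dimension and projective modules lie in `F(Δ)`.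
-/

namespace QHPaper

/-! ### Short exact sequences, extension groups and pushouts -/

open Abelian

universe u v

section ShortExact

variable {R A B C X : Type*} [Ring R] [AddCommGroup A] [Module R A] [AddCommGroup B] [Module R B]
  [AddCommGroup C] [Module R C] [AddCommGroup X] [Module R X]

/-- Short exact sequences `0 → A → B → C → 0` of modules. They are phrased with unbundled linear
maps so that submodules and quotients can be used as terms directly. -/
structure IsShortExact (f : A →ₗ[R] B) (g : B →ₗ[R] C) : Prop where
  injective : Function.Injective f
  exact : Function.Exact f g
  surjective : Function.Surjective g

namespace IsShortExact

variable {f : A →ₗ[R] B} {g : B →ₗ[R] C}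

theorem ker_subtype (hg : Function.Surjective g) : IsShortExact (LinearMap.ker g).subtype g :=
  ⟨Submodule.injective_subtype _, LinearMap.exact_subtype_ker_map g, hg⟩

theorem mkQ_range (hf : Function.Injective f) : IsShortExact f (LinearMap.range f).mkQ :=
  ⟨hf, LinearMap.exact_map_mkQ_range f, Submodule.mkQ_surjective _⟩

theorem subtype_mkQ (N : Submodule R B) : IsShortExact N.subtype N.mkQ :=
  ⟨N.injective_subtype, LinearMap.exact_subtype_mkQ N, N.mkQ_surjective⟩

theorem comp_equiv (h : IsShortExact f g) (e : C ≃ₗ[R] X) : IsShortExact f (e.toLinearMap ∘ₗ g) :=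
  ⟨h.injective, fun b => by simpa using h.exact b, e.surjective.comp h.surjective⟩

theorem equiv_symm_comp (h : IsShortExact f g) (e : B ≃ₗ[R] X) :
    IsShortExact (e.toLinearMap ∘ₗ f) (g ∘ₗ e.symm.toLinearMap) :=
  ⟨e.injective.comp h.injective,
    fun x => by simpa [LinearEquiv.eq_symm_apply] using h.exact (e.symm x),
    h.surjective.comp e.symm.surjective⟩

theorem inr_fst (R A B : Type*) [Ring R] [AddCommGroup A] [Module R A] [AddCommGroup B]
    [Module R B] : IsShortExact (LinearMap.inr R A B) (LinearMap.fst R A B) :=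
  ⟨LinearMap.inr_injective, .inr_fst, LinearMap.fst_surjective⟩

theorem compLeft (h : IsShortExact f g) (ι : Type*) :
    IsShortExact (f.compLeft ι) (g.compLeft ι) := by
  refine ⟨h.injective.comp_left, fun b => ?_, h.surjective.comp_left⟩
  simp only [funext_iff, LinearMap.compLeft_apply, Function.comp_apply, Pi.zero_apply,
    Set.mem_range, h.exact _]
  exact Classical.skolem

theorem finite [IsNoetherianRing R] [Module.Finite R A] [Module.Finite R C]
    (h : IsShortExact f g) : Module.Finite R B :=
  have : IsNoetherian R B := isNoetherian_of_range_eq_ker f g h.exact.linearMap_ker_eq.symm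
  inferInstance

theorem exists_desc (h : IsShortExact f g) (φ : B →ₗ[R] X) (hφ : φ ∘ₗ f = 0) :
    ∃ ψ : C →ₗ[R] X, ψ ∘ₗ g = φ := by
  have hker : LinearMap.ker g ≤ LinearMap.ker φ := by
    rw [h.exact.linearMap_ker_eq, LinearMap.range_le_ker_iff, hφ]
  refine ⟨(LinearMap.ker g).liftQ φ hker ∘ₗ (g.quotKerEquivOfSurjective h.surjective).symm, ?_⟩
  ext b
  have hb : (g.quotKerEquivOfSurjective h.surjective).symm (g b) = (LinearMap.ker g).mkQ b :=
    (LinearEquiv.symm_apply_eq _).2 rfl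
  simp [hb]

theorem exists_lift (h : IsShortExact f g) (φ : X →ₗ[R] B) (hφ : g ∘ₗ φ = 0) :
    ∃ ψ : X →ₗ[R] A, f ∘ₗ ψ = φ := by
  have hrange : LinearMap.range φ ≤ LinearMap.range f := by
    rw [← h.exact.linearMap_ker_eq, LinearMap.range_le_ker_iff, hφ]
  refine ⟨(LinearEquiv.ofInjective f h.injective).symm ∘ₗ
    φ.codRestrict (LinearMap.range f) fun x => hrange ⟨x, rfl⟩, ?_⟩
  ext x
  exact congrArg Subtype.val
    ((LinearEquiv.ofInjective f h.injective).apply_symm_apply ⟨φ x, hrange ⟨x, rfl⟩⟩)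

theorem projective_left (h : IsShortExact f g) [Module.Projective R B] [Module.Projective R C] :
    Module.Projective R A := by
  obtain ⟨s, hs⟩ := Module.projective_lifting_property g LinearMap.id h.surjective
  obtain ⟨r, hr⟩ := h.exists_lift (LinearMap.id - s ∘ₗ g) <| by
    rw [LinearMap.comp_sub, ← LinearMap.comp_assoc, hs, LinearMap.comp_id, LinearMap.id_comp,
      sub_self]
  refine .of_split f r ((LinearMap.cancel_left h.injective).1 ?_)
  rw [← LinearMap.comp_assoc, hr, LinearMap.sub_comp, LinearMap.comp_assoc,
    h.exact.linearMap_comp_eq_zero, LinearMap.comp_zero, sub_zero, LinearMap.id_comp,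
    LinearMap.comp_id]

theorem exists_ker_comp {A' B' : Type*} [AddCommGroup A'] [Module R A'] [AddCommGroup B']
    [Module R B'] (h : IsShortExact f g) {f' : A' →ₗ[R] C} {g' : C →ₗ[R] B'}
    (h' : IsShortExact f' g') :
    ∃ (u : A →ₗ[R] LinearMap.ker (g' ∘ₗ g)) (v : LinearMap.ker (g' ∘ₗ g) →ₗ[R] A'),
      IsShortExact u v := by
  have hsub := ker_subtype (g := g' ∘ₗ g) (h'.surjective.comp h.surjective)
  obtain ⟨u, hu⟩ := hsub.exists_lift f (by
    rw [LinearMap.comp_assoc, h.exact.linearMap_comp_eq_zero, LinearMap.comp_zero])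
  obtain ⟨v, hv⟩ := h'.exists_lift (g ∘ₗ Submodule.subtype _)
    (hsub.exact.linearMap_comp_eq_zero)
  have hu' (a : A) : (u a : B) = f a := congr($hu a)
  have hv' (x : LinearMap.ker (g' ∘ₗ g)) : f' (v x) = g x := congr($hv x)
  refine ⟨u, v, fun a b hab => h.injective ?_, fun x => ?_, fun a' => ?_⟩
  · rw [← hu', ← hu', hab]
  · rw [← map_eq_zero_iff f' h'.injective, hv', h.exact x]
    simp only [Set.mem_range, Subtype.ext_iff, hu']
  · obtain ⟨b, hb⟩ := h.surjective (f' a')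
    have hker : g' (g b) = 0 := by rw [hb, h'.exact.apply_apply_eq_zero]
    exact ⟨⟨b, hker⟩, h'.injective ((hv' _).trans hb)⟩

end IsShortExact

end ShortExact

section ExtVanishes

variable {R : Type u} {A B C X Y : Type u} [Ring R] [AddCommGroup A] [Module R A] [AddCommGroup B]
  [Module R B] [AddCommGroup C] [Module R C] [AddCommGroup X] [Module R X] [AddCommGroup Y]
  [Module R Y]

variable {f : A →ₗ[R] B} {g : B →ₗ[R] C}

theorem IsShortExact.shortExact (h : IsShortExact f g) :
    (ModuleCat.shortComplexOfCompEqZero f g h.exact.linearMap_comp_eq_zero).ShortExact :=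
  ModuleCat.shortComplex_shortExact _ h.exact h.injective h.surjective

variable (R) in
/-- The vanishing of `Ext^n_R(X, Y)`, for unbundled modules `X` and `Y`. -/
def ExtVanishes (n : ℕ) (X Y : Type u) [AddCommGroup X] [Module R X] [AddCommGroup Y]
    [Module R Y] : Prop :=
  ∀ e : Ext (ModuleCat.of R X) (ModuleCat.of R Y) n, e = 0

theorem extVanishes_zero_iff : ExtVanishes R 0 X Y ↔ ∀ φ : X →ₗ[R] Y, φ = 0 := by
  refine ⟨fun h φ => ?_, fun h e => ?_⟩
  · have hφ := (Ext.mk₀_bijective _ _).1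
      ((h (Ext.mk₀ (ModuleCat.ofHom φ))).trans (Ext.mk₀_zero _ _).symm)
    exact congrArg ModuleCat.Hom.hom hφ
  · obtain ⟨φ, rfl⟩ := Ext.homEquiv₀.symm.surjective e
    have hφ : φ = 0 := ModuleCat.hom_ext (h φ.hom)
    rw [hφ, Ext.homEquiv₀_symm_apply, Ext.mk₀_zero]

namespace ExtVanishes

theorem of_projective [Module.Projective R X] (n : ℕ) : ExtVanishes R (n + 1) X Y := fun e =>
  have : Projective (ModuleCat.of R X) := (IsProjective.iff_projective X).1 inferInstance
  e.eq_zero_of_projective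

theorem of_injective [Module.Injective R Y] (n : ℕ) : ExtVanishes R (n + 1) X Y := fun e =>
  have : Injective (ModuleCat.of R Y) := Module.injective_object_of_injective_module R Y
  e.eq_zero_of_injective

theorem of_subsingleton_left [Subsingleton X] (n : ℕ) : ExtVanishes R n X Y := fun e => by
  have hX : Limits.IsZero (ModuleCat.of R X) := ModuleCat.isZero_of_subsingleton _
  rw [← e.mk₀_id_comp, hX.eq_of_src (𝟙 _) 0, Ext.mk₀_zero, Ext.zero_comp]

theorem of_subsingleton_right [Subsingleton Y] (n : ℕ) : ExtVanishes R n X Y := fun e => by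
  have hY : Limits.IsZero (ModuleCat.of R Y) := ModuleCat.isZero_of_subsingleton _
  rw [← e.comp_mk₀_id, hY.eq_of_src (𝟙 _) 0, Ext.mk₀_zero, Ext.comp_zero]

theorem covariant_left (h : IsShortExact f g) {n : ℕ} (hC : ExtVanishes R n X C)
    (hB : ExtVanishes R (n + 1) X B) : ExtVanishes R (n + 1) X A := fun e => by
  obtain ⟨x, rfl⟩ := Ext.covariant_sequence_exact₁ (ModuleCat.of R X) h.shortExact e (hB _) rfl
  rw [hC x, Ext.zero_comp]

theorem covariant_middle (h : IsShortExact f g) {n : ℕ} (hA : ExtVanishes R n X A)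
    (hC : ExtVanishes R n X C) : ExtVanishes R n X B := fun e => by
  obtain ⟨x, rfl⟩ := Ext.covariant_sequence_exact₂ (ModuleCat.of R X) h.shortExact e (hC _)
  rw [hA x, Ext.zero_comp]

theorem covariant_right (h : IsShortExact f g) {n : ℕ} (hB : ExtVanishes R n X B)
    (hA : ExtVanishes R (n + 1) X A) : ExtVanishes R n X C := fun e => by
  obtain ⟨x, rfl⟩ := Ext.covariant_sequence_exact₃ (ModuleCat.of R X) h.shortExact e rfl (hA _)
  rw [hB x, Ext.zero_comp]

theorem contravariant_middle (h : IsShortExact f g) {n : ℕ} (hA : ExtVanishes R n A Y)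
    (hC : ExtVanishes R n C Y) : ExtVanishes R n B Y := fun e => by
  obtain ⟨x, rfl⟩ := Ext.contravariant_sequence_exact₂ h.shortExact (ModuleCat.of R Y) e (hA _)
  rw [hC x, Ext.comp_zero]

theorem contravariant_right (h : IsShortExact f g) {n : ℕ} (hA : ExtVanishes R n A Y)
    (hB : ExtVanishes R (n + 1) B Y) : ExtVanishes R (n + 1) C Y := fun e => by
  obtain ⟨x, rfl⟩ := Ext.contravariant_sequence_exact₃ h.shortExact (ModuleCat.of R Y) e (hB _)
    (add_comm 1 n)
  rw [hA x, Ext.comp_zero]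

theorem exists_extension (h : IsShortExact f g) (hC : ExtVanishes R 1 C Y) (φ : A →ₗ[R] Y) :
    ∃ ψ : B →ₗ[R] Y, ψ ∘ₗ f = φ := by
  obtain ⟨x, hx⟩ := Ext.contravariant_sequence_exact₁ h.shortExact (ModuleCat.of R Y)
    (Ext.mk₀ (ModuleCat.ofHom φ)) rfl (hC _)
  obtain ⟨ψ, rfl⟩ := Ext.homEquiv₀.symm.surjective x
  rw [Ext.homEquiv₀_symm_apply, Ext.mk₀_comp_mk₀] at hx
  exact ⟨ψ.hom, congrArg ModuleCat.Hom.hom ((Ext.mk₀_bijective _ _).1 hx)⟩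

theorem of_exists_extension (h : IsShortExact f g) (hB : ExtVanishes R 1 B Y)
    (hext : ∀ φ : A →ₗ[R] Y, ∃ ψ : B →ₗ[R] Y, ψ ∘ₗ f = φ) : ExtVanishes R 1 C Y := fun e => by
  obtain ⟨x, rfl⟩ := Ext.contravariant_sequence_exact₃ h.shortExact (ModuleCat.of R Y) e (hB _)
    (n₀ := 0) rfl
  obtain ⟨φ, rfl⟩ := Ext.homEquiv₀.symm.surjective x
  obtain ⟨ψ, hψ⟩ := hext φ.hom
  have hφ : φ = ModuleCat.ofHom f ≫ ModuleCat.ofHom ψ := ModuleCat.hom_ext hψ.symm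
  rw [hφ, Ext.homEquiv₀_symm_apply, ← Ext.mk₀_comp_mk₀]
  exact h.shortExact.extClass_comp_assoc _

end ExtVanishes

end ExtVanishes

section Pushout

variable {R A B C D M : Type*} [Ring R] [AddCommGroup A] [Module R A] [AddCommGroup B]
  [Module R B] [AddCommGroup C] [Module R C] [AddCommGroup D] [Module R D] [AddCommGroup M]
  [Module R M]

/-- The pushout of `i : B → A` along `j : B → M`, realised as a quotient of `A × M`. -/
abbrev Pushout (i : B →ₗ[R] A) (j : B →ₗ[R] M) : Type _ :=
  (A × M) ⧸ LinearMap.range (i.prod (-j))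

namespace Pushout

/-- The first structure map `A → Pushout i j`. -/
def inl (i : B →ₗ[R] A) (j : B →ₗ[R] M) : A →ₗ[R] Pushout i j :=
  Submodule.mkQ _ ∘ₗ LinearMap.inl R A M

/-- The second structure map `M → Pushout i j`. -/
def inr (i : B →ₗ[R] A) (j : B →ₗ[R] M) : M →ₗ[R] Pushout i j :=
  Submodule.mkQ _ ∘ₗ LinearMap.inr R A M

/-- Pushouts are symmetric in the two maps. -/
def comm (i : B →ₗ[R] A) (j : B →ₗ[R] M) : Pushout i j ≃ₗ[R] Pushout j i :=
  Submodule.Quotient.equiv _ _ (LinearEquiv.prodComm R A M) <| by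
    rw [← LinearMap.range_neg (j.prod (-i)), ← LinearMap.range_comp]
    congr 1
    ext b <;> simp

variable {i : B →ₗ[R] A} {j : B →ₗ[R] M}

theorem comm_comp_inr : (comm i j).toLinearMap ∘ₗ inr i j = inl j i :=
  rfl

theorem inl_eq_inr_iff {a : A} {m : M} : inl i j a = inr i j m ↔ ∃ b, i b = a ∧ j b = m := by
  simp [inl, inr, Submodule.Quotient.eq, LinearMap.mem_range, Prod.ext_iff]

theorem exists_inl_add_inr (x : Pushout i j) : ∃ a m, inl i j a + inr i j m = x := by
  obtain ⟨⟨a, m⟩, rfl⟩ := Submodule.mkQ_surjective _ x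
  exact ⟨a, m, by simp [inl, inr, ← Submodule.Quotient.mk_add]⟩

theorem exists_desc (φ : A →ₗ[R] C) (ψ : M →ₗ[R] C) (h : φ ∘ₗ i = ψ ∘ₗ j) :
    ∃ θ : Pushout i j →ₗ[R] C, θ ∘ₗ inl i j = φ ∧ θ ∘ₗ inr i j = ψ := by
  have hker : LinearMap.range (i.prod (-j)) ≤ LinearMap.ker (φ.coprod ψ) := by
    rw [LinearMap.range_le_ker_iff]
    ext b
    simpa [← sub_eq_add_neg, sub_eq_zero] using congr($h b)
  exact ⟨Submodule.liftQ _ _ hker, by ext; simp [inl], by ext; simp [inr]⟩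

theorem isShortExact_inr {p : A →ₗ[R] C} (hi : IsShortExact i p) :
    ∃ q : Pushout i j →ₗ[R] C, q ∘ₗ inl i j = p ∧ IsShortExact (inr i j) q := by
  obtain ⟨q, hql, hqr⟩ := exists_desc p (0 : M →ₗ[R] C)
    (hi.exact.linearMap_comp_eq_zero.trans (LinearMap.zero_comp j).symm)
  have hqr' (m : M) : q (inr i j m) = 0 := congr($hqr m)
  have hql' (a : A) : q (inl i j a) = p a := congr($hql a)
  refine ⟨q, hql, (injective_iff_map_eq_zero _).2 fun m hm => ?_, fun x => ⟨fun hx => ?_, ?_⟩,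
    fun c => ?_⟩
  · obtain ⟨b, hb, rfl⟩ := inl_eq_inr_iff.1 ((map_zero (inl i j)).trans hm.symm)
    rw [(map_eq_zero_iff i hi.injective).1 hb, map_zero]
  · obtain ⟨a, m, rfl⟩ := exists_inl_add_inr x
    rw [map_add, hqr', add_zero, hql'] at hx
    obtain ⟨b, rfl⟩ := (hi.exact a).1 hx
    exact ⟨j b + m, by rw [map_add, inl_eq_inr_iff.2 ⟨b, rfl, rfl⟩]⟩
  · rintro ⟨m, rfl⟩
    exact hqr' m
  · obtain ⟨a, rfl⟩ := hi.surjective c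
    exact ⟨inl i j a, hql' a⟩

theorem isShortExact_inl {q : M →ₗ[R] D} (hj : IsShortExact j q) :
    ∃ p : Pushout i j →ₗ[R] D, IsShortExact (inl i j) p := by
  obtain ⟨p, -, hp⟩ := isShortExact_inr (j := i) hj
  exact ⟨_, comm_comp_inr (i := j) (j := i) ▸ hp.equiv_symm_comp (comm j i)⟩

theorem isShortExact_comp_inl {k : D →ₗ[R] B} (hj : IsShortExact k j)
    (hi : Function.Injective i) : IsShortExact (i ∘ₗ k) (inl i j) := by
  refine ⟨hi.comp hj.injective, fun a => ?_, fun x => ?_⟩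
  · rw [← map_zero (inr i j), inl_eq_inr_iff]
    constructor
    · rintro ⟨b, rfl, hb⟩
      obtain ⟨d, rfl⟩ := (hj.exact b).1 hb
      exact ⟨d, rfl⟩
    · rintro ⟨d, rfl⟩
      exact ⟨k d, rfl, hj.exact.apply_apply_eq_zero d⟩
  · obtain ⟨a, m, rfl⟩ := exists_inl_add_inr x
    obtain ⟨b, rfl⟩ := hj.surjective m
    exact ⟨a + i b, by rw [map_add, inl_eq_inr_iff.2 ⟨b, rfl, rfl⟩]⟩

end Pushout

end Pushout

/-! ### Filtrations and resolutions -/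

section Filtered

variable {R : Type u} [Ring R] {ι : Type*}

/-- `Filtered D s M` says that `M` has a finite filtration whose sections are modules `D i` with
`i ∈ s`. In contrast to `HasFiltrationWithSections` the indexing of the filtration is not
recorded, which makes structural induction available. -/
inductive Filtered (D : ι → ModuleCat.{v} R) (s : Set ι) :
    ∀ (M : Type v) [AddCommGroup M] [Module R M], Prop
  | zero {M : Type v} [AddCommGroup M] [Module R M] [Subsingleton M] : Filtered D s M
  | step {A B : Type v} [AddCommGroup A] [Module R A] [AddCommGroup B] [Module R B] {i : ι}
      (hi : i ∈ s) {f : A →ₗ[R] B} {g : B →ₗ[R] D i} (h : IsShortExact f g)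
      (hA : Filtered D s A) : Filtered D s B

namespace Filtered

variable {D : ι → ModuleCat.{v} R} {s t : Set ι} {A B C : Type v} [AddCommGroup A] [Module R A]
  [AddCommGroup B] [Module R B] [AddCommGroup C] [Module R C]

theorem mono (hA : Filtered D s A) (hst : s ⊆ t) : Filtered D t A := by
  induction hA with
  | zero => exact zero
  | step hi h _ ih => exact step (hst hi) h ih

theorem equiv (hA : Filtered D s A) (e : A ≃ₗ[R] B) : Filtered D s B := by
  cases hA with
  | zero =>
    have := e.symm.injective.subsingleton
    exact zero
  | step hi h hA => exact step hi (h.equiv_symm_comp e) hA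

theorem single {i : ι} (hi : i ∈ s) : Filtered D s (D i) :=
  step (A := PUnit) (f := 0) (g := LinearMap.id) hi
    ⟨Function.injective_of_subsingleton _, (LinearMap.exact_zero_iff_injective _ _).2
      Function.injective_id, Function.surjective_id⟩ zero

theorem of_isShortExact {f : A →ₗ[R] B} {g : B →ₗ[R] C} (h : IsShortExact f g)
    (hA : Filtered D s A) (hC : Filtered D s C) : Filtered D s B := by
  induction hC generalizing B with
  | zero =>
    have hf : Function.Surjective f := fun b => (h.exact b).1 (Subsingleton.elim _ _)
    exact hA.equiv (LinearEquiv.ofBijective f ⟨h.injective, hf⟩)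
  | step hi h' _ ih =>
    obtain ⟨u, v, huv⟩ := h.exists_ker_comp h'
    exact step hi (.ker_subtype (h'.surjective.comp h.surjective)) (ih huv)

end Filtered

end Filtered

section FiniteFiltration

variable {S : Type} [Ring S] {A B X : Type} [AddCommGroup A] [Module S A] [AddCommGroup B]
  [Module S B] [AddCommGroup X] [Module S X]

theorem nonempty_subquot_map_equiv {φ : A →ₗ[S] B} (hφ : Function.Injective φ)
    (N N' : Submodule S A) :
    Nonempty (subquot S (M := ModuleCat.of S B) (N.map φ) (N'.map φ) ≃ₗ[S]
      subquot S (M := ModuleCat.of S A) N N') := by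
  refine ⟨(Submodule.Quotient.equiv _ _ (Submodule.equivMapOfInjective φ hφ N') ?_).symm⟩
  ext ⟨_, a, ha, rfl⟩
  have hsymm : (Submodule.equivMapOfInjective φ hφ N').symm ⟨φ a, a, ha, rfl⟩ = ⟨a, ha⟩ :=
    (LinearEquiv.symm_apply_eq _).2 rfl
  simp [hsymm, hφ.eq_iff]

theorem nonempty_subquot_map_top_equiv {φ : A →ₗ[S] B} {ψ : B →ₗ[S] X} (h : IsShortExact φ ψ) :
    Nonempty (subquot S (M := ModuleCat.of S B) ((⊤ : Submodule S A).map φ) ⊤ ≃ₗ[S] X) := by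
  have hker : LinearMap.ker (ψ ∘ₗ (⊤ : Submodule S B).subtype) =
      ((⊤ : Submodule S A).map φ).comap (⊤ : Submodule S B).subtype := by
    rw [LinearMap.ker_comp, Submodule.map_top, h.exact.linearMap_ker_eq]
  refine ⟨(Submodule.quotEquivOfEq _ _ hker.symm).trans
    (LinearMap.quotKerEquivOfSurjective _ (h.surjective.comp fun b => ⟨⟨b, trivial⟩, rfl⟩))⟩

theorem HasFiltrationWithSections.snoc {n : ℕ} {F : Fin (n + 1) → Submodule S A}
    {D : Fin n → ModuleCat.{0} S} (hF : HasFiltrationWithSections S (.of S A) n F D)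
    {φ : A →ₗ[S] B} {X : ModuleCat.{0} S} {ψ : B →ₗ[S] X} (h : IsShortExact φ ψ) :
    HasFiltrationWithSections S (.of S B) (n + 1)
      (Fin.snoc (α := fun _ => Submodule S B) (fun j => (F j).map φ) ⊤)
      (Fin.snoc (α := fun _ => ModuleCat.{0} S) D X) := by
  obtain ⟨hmono, hbot, htop, hsec⟩ := hF
  refine ⟨Fin.monotone_iff_le_succ.2 fun j => ?_, ?_, Fin.snoc_last .., fun j => ?_⟩
  · induction j using Fin.lastCases with
    | last => simp
    | cast j =>
      rw [Fin.succ_castSucc, Fin.snoc_castSucc, Fin.snoc_castSucc]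
      exact Submodule.map_mono (hmono Fin.castSucc_lt_succ.le)
  · rw [← Fin.castSucc_zero, Fin.snoc_castSucc, hbot]
    exact Submodule.map_bot φ
  · induction j using Fin.lastCases with
    | last =>
      rw [Fin.snoc_last, Fin.succ_last, Fin.snoc_last, Fin.snoc_castSucc, htop]
      exact nonempty_subquot_map_top_equiv h
    | cast j =>
      rw [Fin.snoc_castSucc, Fin.succ_castSucc, Fin.snoc_castSucc, Fin.snoc_castSucc]
      exact ⟨(nonempty_subquot_map_equiv h.injective _ _).some.trans (hsec j).some⟩

theorem HasFiltrationWithSections.exists_isShortExact_subtype_last {n : ℕ}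
    {F : Fin (n + 2) → Submodule S A} {D : Fin (n + 1) → ModuleCat.{0} S}
    (hF : HasFiltrationWithSections S (.of S A) (n + 1) F D) :
    ∃ g : A →ₗ[S] D (Fin.last n), IsShortExact (F (Fin.last n).castSucc).subtype g := by
  obtain ⟨-, -, htop, hsec⟩ := hF
  obtain ⟨e⟩ := hsec (Fin.last n)
  rw [Fin.succ_last, htop] at e
  have hrange : (F (Fin.last n).castSucc).comap (⊤ : Submodule S A).subtype =
      (F (Fin.last n).castSucc).map Submodule.topEquiv.symm.toLinearMap :=
    (Submodule.map_equiv_eq_comap_symm Submodule.topEquiv.symm _).symm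
  exact ⟨_, (IsShortExact.subtype_mkQ (F (Fin.last n).castSucc)).comp_equiv
    ((Submodule.Quotient.equiv _ _ Submodule.topEquiv.symm hrange.symm).trans e)⟩

variable {Λ : Type*} {D : Λ → ModuleCat.{0} S} {s : Set Λ}

theorem Filtered.exists_hasFiltrationWithSections (hA : Filtered D s A) :
    ∃ (n : ℕ) (F : Fin (n + 1) → Submodule S A) (c : Fin n → Λ),
      HasFiltrationWithSections S (.of S A) n F (fun i => D (c i)) := by
  induction hA with
  | zero =>
    exact ⟨0, fun _ => ⊥, Fin.elim0, monotone_const, rfl, Subsingleton.elim _ _, fun i => i.elim0⟩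
  | @step A B _ _ _ _ i _ φ ψ h _ ih =>
    obtain ⟨n, F, c, hF⟩ := ih
    have hc : (fun j => D (Fin.snoc (α := fun _ => Λ) c i j)) =
        Fin.snoc (α := fun _ => ModuleCat.{0} S) (fun j => D (c j)) (D i) :=
      Fin.comp_snoc D c i
    exact ⟨n + 1, _, Fin.snoc (α := fun _ => Λ) c i, hc ▸ hF.snoc h⟩

theorem Filtered.of_hasFiltrationWithSections {n : ℕ} {F : Fin (n + 1) → Submodule S A}
    {c : Fin n → Λ} (hF : HasFiltrationWithSections S (.of S A) n F (fun i => D (c i)))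
    (i : Fin (n + 1)) (hc : ∀ j : Fin n, j.castSucc < i → c j ∈ s) : Filtered D s (F i) := by
  obtain ⟨hmono, hbot, -, hsec⟩ := hF
  induction i using Fin.induction with
  | zero =>
    rw [hbot]
    exact .zero
  | succ i ih =>
    obtain ⟨e⟩ := hsec i
    have hle : F i.castSucc ≤ F i.succ := hmono Fin.castSucc_lt_succ.le
    have h : IsShortExact (Submodule.inclusion hle)
        (Submodule.mkQ ((F i.castSucc).comap (F i.succ).subtype)) :=
      ⟨Submodule.inclusion_injective hle, by
        rw [LinearMap.exact_iff, Submodule.ker_mkQ, Submodule.range_inclusion],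
        Submodule.mkQ_surjective _⟩
    exact .step (hc i Fin.castSucc_lt_succ) (h.comp_equiv e)
      (ih fun j hj => hc j (hj.trans Fin.castSucc_lt_succ))

theorem filtered_univ_iff : Filtered D Set.univ A ↔
    ∃ (n : ℕ) (F : Fin (n + 1) → Submodule S A) (c : Fin n → Λ),
      HasFiltrationWithSections S (.of S A) n F (fun i => D (c i)) := by
  refine ⟨Filtered.exists_hasFiltrationWithSections, fun ⟨n, F, c, hF⟩ => ?_⟩
  have hA : Filtered D Set.univ (F (Fin.last n)) := .of_hasFiltrationWithSections hF _ (by simp)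
  rw [hF.2.2.1] at hA
  exact hA.equiv Submodule.topEquiv

end FiniteFiltration

section Resolution

variable {S : Type} [Ring S]

/-- Existence of a resolution `0 → N_d → ⋯ → N_0 → M → 0` with all `N_i` in the class `K`, in
recursive form: the syzygies are made explicit. -/
def Resolves (K : ModuleCat.{0} S → Prop) : ℕ → ModuleCat.{0} S → Prop
  | 0, M => K M
  | d + 1, M => ∃ (B A : ModuleCat.{0} S) (f : B →ₗ[S] A) (g : A →ₗ[S] M),
      IsShortExact f g ∧ K A ∧ Resolves K d B

variable {K : ModuleCat.{0} S → Prop}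

theorem Resolves.equiv (hK : ∀ {M M' : ModuleCat.{0} S}, K M → (M ≃ₗ[S] M') → K M') {d : ℕ}
    {M M' : ModuleCat.{0} S} (hM : Resolves K d M) (e : M ≃ₗ[S] M') : Resolves K d M' := by
  cases d with
  | zero => exact hK hM e
  | succ d =>
    obtain ⟨B, A, f, g, h, hA, hB⟩ := hM
    exact ⟨B, A, f, _, h.comp_equiv e, hA, hB⟩

theorem Resolves.mono {W : ModuleCat.{0} S → Prop} (hKW : ∀ X, K X → W X) {d : ℕ}
    {M : ModuleCat.{0} S} (hM : Resolves K d M) : Resolves W d M := by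
  induction d generalizing M with
  | zero => exact hKW M hM
  | succ d ih =>
    obtain ⟨B, A, f, g, h, hA, hB⟩ := hM
    exact ⟨B, A, f, g, h, hKW A hA, ih hB⟩

theorem resolves_of_isExactSeq (hK : ∀ {M M' : ModuleCat.{0} S}, K M → (M ≃ₗ[S] M') → K M')
    {d : ℕ} {N : Fin (d + 2) → ModuleCat.{0} S}
    {f : ∀ i : Fin (d + 1), N i.castSucc →ₗ[S] N i.succ} (h : IsExactSeq S d N f)
    (hN : ∀ i : Fin (d + 1), K (N i.castSucc)) : Resolves K d (N (Fin.last (d + 1))) := by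
  obtain ⟨hinj, hsurj, hexact⟩ := h
  have hrange (i : Fin (d + 1)) : Resolves K i (.of S (LinearMap.range (f i))) := by
    induction i using Fin.induction with
    | zero => exact hK (hN 0) (LinearEquiv.ofInjective (f 0) hinj)
    | succ i ih =>
      refine ⟨_, _, (LinearMap.range (f i.castSucc)).subtype, (f i.succ).rangeRestrict,
        ⟨Submodule.injective_subtype _, ?_, LinearMap.surjective_rangeRestrict _⟩, hN i.succ, ih⟩
      rw [LinearMap.exact_iff, LinearMap.ker_rangeRestrict, Submodule.range_subtype, hexact i]
  exact (hrange (Fin.last d)).equiv hK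
    ((LinearEquiv.ofEq _ _ (LinearMap.range_eq_top.2 hsurj)).trans Submodule.topEquiv)

/-- The objects of the exact sequence `0 → B → A → N₁ → N₂ → ⋯` obtained by splicing
`0 → B → A → N₀ → 0` with `0 → N₀ → N₁ → ⋯`. -/
abbrev spliceObj (B A : ModuleCat.{0} S) {e : ℕ} (N : Fin (e + 2) → ModuleCat.{0} S) :
    Fin (e + 3) → ModuleCat.{0} S :=
  Fin.cons B (Fin.cons A (Fin.tail N))

/-- The maps of the spliced sequence with objects `spliceObj B A N`. -/
def spliceMap {B A : ModuleCat.{0} S} {e : ℕ} {N : Fin (e + 2) → ModuleCat.{0} S}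
    (f : B →ₗ[S] A) (g : A →ₗ[S] N 0) (φ : ∀ i : Fin (e + 1), N i.castSucc →ₗ[S] N i.succ) :
    ∀ i : Fin (e + 2), spliceObj B A N i.castSucc →ₗ[S] spliceObj B A N i.succ :=
  Fin.cons f (Fin.cons (φ 0 ∘ₗ g) fun i => φ i.succ)

theorem IsExactSeq.splice {B A : ModuleCat.{0} S} {e : ℕ} {N : Fin (e + 2) → ModuleCat.{0} S}
    {φ : ∀ i : Fin (e + 1), N i.castSucc →ₗ[S] N i.succ} (hφ : IsExactSeq S e N φ)
    {f : B →ₗ[S] A} {g : A →ₗ[S] N 0} (h : IsShortExact f g) :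
    IsExactSeq S (e + 1) (spliceObj B A N) (spliceMap f g φ) := by
  obtain ⟨hinj, hsurj, hexact⟩ := hφ
  refine ⟨h.injective, ?_, fun i => ?_⟩
  · cases e with
    | zero => exact hsurj.comp h.surjective
    | succ e => exact hsurj
  · rcases i with ⟨_ | _ | i, hi⟩
    · exact h.exact.linearMap_ker_eq.symm.trans
        (LinearMap.ker_comp_of_ker_eq_bot g (LinearMap.ker_eq_bot.2 hinj)).symm
    · exact (LinearMap.range_comp_of_range_eq_top (φ 0)
        (LinearMap.range_eq_top.2 h.surjective)).trans (hexact ⟨0, by omega⟩)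
    · exact hexact ⟨i + 1, by omega⟩

theorem Resolves.exists_isExactSeq_of_tail {d e n : ℕ} (hn : d + e = n)
    {N : Fin (e + 2) → ModuleCat.{0} S} {φ : ∀ i : Fin (e + 1), N i.castSucc →ₗ[S] N i.succ}
    (hφ : IsExactSeq S e N φ) (hN : ∀ i : Fin e, K (N i.succ.castSucc))
    (hd : Resolves K d (N 0)) :
    ∃ (N' : Fin (n + 2) → ModuleCat.{0} S)
      (φ' : ∀ i : Fin (n + 1), N' i.castSucc →ₗ[S] N' i.succ),
      IsExactSeq S n N' φ' ∧ N' (Fin.last (n + 1)) = N (Fin.last (e + 1)) ∧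
        ∀ i : Fin (n + 1), K (N' i.castSucc) := by
  induction d generalizing e N φ with
  | zero =>
    obtain rfl : e = n := by omega
    exact ⟨N, φ, hφ, rfl, Fin.cases hd hN⟩
  | succ d ih =>
    obtain ⟨B, A, f, g, h, hA, hB⟩ := hd
    exact ih (e := e + 1) (by omega) (hφ.splice h) (Fin.cases hA hN) hB

theorem resolves_iff (hK : ∀ {M M' : ModuleCat.{0} S}, K M → (M ≃ₗ[S] M') → K M') {d : ℕ}
    {M : ModuleCat.{0} S} :
    Resolves K d M ↔ ∃ (N : Fin (d + 2) → ModuleCat.{0} S)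
      (f : ∀ i : Fin (d + 1), N i.castSucc →ₗ[S] N i.succ),
      IsExactSeq S d N f ∧ N (Fin.last (d + 1)) = M ∧ ∀ i : Fin (d + 1), K (N i.castSucc) := by
  constructor
  · exact fun hM => hM.exists_isExactSeq_of_tail (e := 0) (N := fun _ => M)
      (φ := fun _ => LinearMap.id) (add_zero d)
      ⟨Function.injective_id, Function.surjective_id, fun i => i.elim0⟩ fun i => i.elim0
  · rintro ⟨N, f, hf, rfl, hN⟩
    exact resolves_of_isExactSeq hK hf hN

end Resolution

/-! ### Heads and socles -/

section HeadSocle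

variable {R L M M' X : Type*} [Ring R] [AddCommGroup L] [Module R L] [AddCommGroup M] [Module R M]
  [AddCommGroup M'] [Module R M'] [AddCommGroup X] [Module R X]

/-- `g : M → L` exhibits `L` as the head of `M`. For `L` simple this says that `ker g` is the only
maximal submodule of `M` and that it contains every proper submodule. -/
structure IsHead (g : M →ₗ[R] L) : Prop where
  surjective : Function.Surjective g
  le_ker {N : Submodule R M} : N ≠ ⊤ → N ≤ LinearMap.ker g

/-- `f : L → M` exhibits `L` as the socle of `M`. For `L` simple this says that the image of `f` is
the only minimal submodule of `M` and that it is contained in every nonzero submodule. -/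
structure IsSocle (f : L →ₗ[R] M) : Prop where
  injective : Function.Injective f
  range_le {N : Submodule R M} : N ≠ ⊥ → LinearMap.range f ≤ N

namespace IsHead

variable {g : M →ₗ[R] L}

theorem of_superfluous [IsSimpleModule R L] (hg : Function.Surjective g)
    (h : ∀ N : Submodule R M, N ⊔ LinearMap.ker g = ⊤ → N = ⊤) : IsHead g := by
  refine ⟨hg, fun {N} hN => ?_⟩
  by_contra hle
  have hmap : N.map g = ⊤ := (eq_bot_or_eq_top _).resolve_left fun h0 =>
    hle (LinearMap.le_ker_iff_map.2 h0)
  exact hN (h N (by rw [← Submodule.comap_map_eq, hmap, Submodule.comap_top]))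

theorem ker_le (h : IsHead g) {φ : M →ₗ[R] X} (hφ : φ ≠ 0) :
    LinearMap.ker φ ≤ LinearMap.ker g :=
  h.le_ker fun hker => hφ (LinearMap.ker_eq_top.1 hker)

theorem exists_comp_rangeRestrict (h : IsHead g) {φ : M →ₗ[R] X} (hφ : φ ≠ 0) :
    ∃ ψ : LinearMap.range φ →ₗ[R] L, ψ ∘ₗ φ.rangeRestrict = g :=
  (IsShortExact.ker_subtype φ.surjective_rangeRestrict).exists_desc g <| by
    rw [← LinearMap.range_le_ker_iff, Submodule.range_subtype, LinearMap.ker_rangeRestrict]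
    exact h.ker_le hφ

theorem of_comp {ρ : M →ₗ[R] M'} {τ : M' →ₗ[R] L} (h : IsHead (τ ∘ₗ ρ))
    (hρ : Function.Surjective ρ) : IsHead τ := by
  refine ⟨.of_comp h.surjective, fun {N} hN => ?_⟩
  have hN' : N.comap ρ ≠ ⊤ := fun htop => hN <| by
    rw [← Submodule.map_comap_eq_of_surjective hρ N, htop, Submodule.map_top,
      LinearMap.range_eq_top.2 hρ]
  have hle := h.le_ker hN'
  rwa [LinearMap.ker_comp, Submodule.comap_le_comap_iff_of_surjective hρ] at hle

theorem finite [Nontrivial L] (h : IsHead g) : Module.Finite R M := by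
  obtain ⟨y, hy⟩ := exists_ne (0 : L)
  obtain ⟨x, rfl⟩ := h.surjective y
  have htop : R ∙ x = ⊤ := by
    by_contra hne
    exact hy (h.le_ker hne (Submodule.mem_span_singleton_self x))
  exact ⟨htop ▸ Submodule.fg_span_singleton x⟩

end IsHead

namespace IsSocle

variable {f : L →ₗ[R] M}

theorem of_essential [IsSimpleModule R L] (hf : Function.Injective f)
    (h : ∀ N : Submodule R M, N ⊓ LinearMap.range f = ⊥ → N = ⊥) : IsSocle f := by
  refine ⟨hf, fun {N} hN => ?_⟩
  have hcomap : N.comap f = ⊤ := (eq_bot_or_eq_top _).resolve_left fun h0 => hN (h N (by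
    rw [inf_comm, ← Submodule.map_comap_eq, h0, Submodule.map_bot]))
  rw [← Submodule.map_top, Submodule.map_le_iff_le_comap, hcomap]

theorem of_comp {σ : L →ₗ[R] M'} {j : M' →ₗ[R] M} (h : IsSocle (j ∘ₗ σ))
    (hj : Function.Injective j) : IsSocle σ := by
  refine ⟨.of_comp h.injective, fun {N} hN => ?_⟩
  have hmap : N.map j ≠ ⊥ :=
    ((Submodule.map_injective_of_injective hj).ne_iff' (Submodule.map_bot j)).2 hN
  have hle := h.range_le hmap
  rwa [LinearMap.range_comp, Submodule.map_le_map_iff_of_injective hj] at hle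

theorem injective_of_comp [Nontrivial L] (h : IsSocle f) {ψ : M →ₗ[R] X}
    (hψ : Function.Injective (ψ ∘ₗ f)) : Function.Injective ψ := by
  rw [← LinearMap.ker_eq_bot]
  by_contra hker
  have hzero : ψ ∘ₗ f = 0 := LinearMap.range_le_ker_iff.1 (h.range_le hker)
  exact LinearMap.ne_zero_of_injective hψ hzero

theorem range_le_range [Nontrivial L] [IsSimpleModule R X] (h : IsSocle f) (ω : X →ₗ[R] M) :
    LinearMap.range ω ≤ LinearMap.range f := by
  rcases eq_or_ne ω 0 with rfl | hω
  · simp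
  have hle : LinearMap.range f ≤ LinearMap.range ω :=
    h.range_le (mt LinearMap.range_eq_bot.1 hω)
  have hne : (LinearMap.range f).comap ω ≠ ⊥ := fun h0 =>
    LinearMap.ne_zero_of_injective h.injective <| by
      rw [← LinearMap.range_eq_bot, ← inf_eq_right.2 hle, ← Submodule.map_comap_eq, h0,
        Submodule.map_bot]
  rw [← Submodule.map_top, Submodule.map_le_iff_le_comap,
    (eq_bot_or_eq_top ((LinearMap.range f).comap ω)).resolve_left hne]

end IsSocle

section Essential

variable {S L I : Type*} [Ring S] [AddCommGroup L] [Module S L] [AddCommGroup I] [Module S I]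
  {ι : L →ₗ[S] I}

-- A `k`-linear retraction `e` of `ι` embeds `I` into `Hom_k(S, L)` by `v ↦ (s ↦ e (s • v))`: the
-- kernel of this map is an `S`-submodule meeting the image of `ι` trivially.
theorem finiteDimensional_of_essential {k : Type*} [Field k] [Algebra k S]
    [FiniteDimensional k S] [Module k L] [IsScalarTower k S L] [FiniteDimensional k L]
    [Module k I] [IsScalarTower k S I] (hι : Function.Injective ι)
    (hess : ∀ N : Submodule S I, N ⊓ LinearMap.range ι = ⊥ → N = ⊥) : FiniteDimensional k I := by
  obtain ⟨e, he⟩ := LinearMap.exists_leftInverse_of_injective (ι.restrictScalars k)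
    (LinearMap.ker_eq_bot.2 hι)
  have he' (x : L) : e (ι x) = x := congr($he x)
  let Φ : I →ₗ[k] S →ₗ[k] L := LinearMap.mk₂ k (fun v s => e (s • v))
    (fun v w s => by rw [smul_add, map_add]) (fun c v s => by rw [smul_algebra_smul_comm, map_smul])
    (fun v s t => by rw [add_smul, map_add]) (fun c v s => by rw [smul_assoc, map_smul])
  let N : Submodule S I :=
    { carrier := {v | ∀ s : S, e (s • v) = 0}
      add_mem' := fun {v w} hv hw s => by rw [smul_add, map_add, hv, hw, add_zero]
      zero_mem' := fun s => by rw [smul_zero, map_zero]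
      smul_mem' := fun c v hv s => by rw [← mul_smul]; exact hv _ }
  have hN : N = ⊥ := by
    refine hess N (eq_bot_iff.2 ?_)
    rintro _ ⟨hv, x, rfl⟩
    have hx : x = 0 := by simpa [he'] using hv 1
    rw [hx, map_zero]
    exact zero_mem _
  have hΦ : Function.Injective Φ := (injective_iff_map_eq_zero Φ).2 fun v hv =>
    (Submodule.mem_bot S).1 (hN ▸ (fun s => congr($hv s) : v ∈ N))
  exact Module.Finite.of_injective Φ hΦ

theorem finite_of_essential (k : Type*) [Field k] [Algebra k S] [FiniteDimensional k S]
    [Module.Finite S L] (hι : Function.Injective ι)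
    (hess : ∀ N : Submodule S I, N ⊓ LinearMap.range ι = ⊥ → N = ⊥) : Module.Finite S I := by
  let : Module k L := Module.compHom _ (algebraMap k S)
  let : Module k I := Module.compHom _ (algebraMap k S)
  have : IsScalarTower k S L := ⟨fun a s x => by rw [Algebra.smul_def, mul_smul]; rfl⟩
  have : IsScalarTower k S I := ⟨fun a s x => by rw [Algebra.smul_def, mul_smul]; rfl⟩
  have : FiniteDimensional k L := Module.Finite.trans S L
  have : FiniteDimensional k I := finiteDimensional_of_essential hι hess
  exact Module.Finite.of_restrictScalars_finite k S I

end Essential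

end HeadSocle

/-! ### Standard modules -/

section QuasiHereditary

variable {S : Type} [Ring S] {Λ : Type} [Fintype Λ] [PartialOrder Λ]
variable {A B C X : Type} [AddCommGroup A] [Module S A] [AddCommGroup B] [Module S B]
  [AddCommGroup C] [Module S C] [AddCommGroup X] [Module S X]

theorem exists_not_castSucc_and_succ {n : ℕ} {p : Fin (n + 1) → Prop} (h0 : ¬p 0)
    (hlast : p (Fin.last n)) : ∃ j : Fin n, ¬p j.castSucc ∧ p j.succ := by
  by_contra! h
  have hp (j : Fin (n + 1)) : ¬p j := Fin.induction h0 h j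
  exact hp _ hlast

namespace QHData

variable (Q : QHData S Λ)

instance (l : Λ) : Module.Projective S (Q.P l) := (Q.projCover l).1
instance (l : Λ) : Module.Injective S (Q.I l) := (Q.injHull l).1
instance (l : Λ) : IsSimpleModule S (Q.L l) := Q.simpleL l
instance (l : Λ) : Nontrivial (Q.L l) := IsSimpleModule.nontrivial S _

theorem exists_isHead_proj (l : Λ) : ∃ π : Q.P l →ₗ[S] Q.L l, IsHead π := by
  obtain ⟨-, π, hπ, hN⟩ := Q.projCover l
  exact ⟨π, .of_superfluous hπ hN⟩

instance finite_proj (l : Λ) : Module.Finite S (Q.P l) := by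
  obtain ⟨π, hπ⟩ := Q.exists_isHead_proj l
  exact hπ.finite

theorem exists_equiv_of_isSimpleModule (X : Type) [AddCommGroup X] [Module S X]
    [IsSimpleModule S X] : ∃ l, Nonempty (X ≃ₗ[S] Q.L l) :=
  Q.fullL (.of S X) ‹_›

/-- `L l` is a composition factor of `M`, expressed by maps out of the projective cover of `L l`;
see `hasFactor_iff_isCompFactor`. -/
def HasFactor (l : Λ) (M : Type) [AddCommGroup M] [Module S M] : Prop :=
  ∃ φ : Q.P l →ₗ[S] M, φ ≠ 0

variable {Q}

namespace HasFactor

variable {l m : Λ}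

theorem of_injective (h : Q.HasFactor l A) {f : A →ₗ[S] B} (hf : Function.Injective f) :
    Q.HasFactor l B := by
  obtain ⟨φ, hφ⟩ := h
  exact ⟨f ∘ₗ φ, fun h0 =>
    hφ ((LinearMap.cancel_left hf).1 (h0.trans (LinearMap.comp_zero f).symm))⟩

theorem of_surjective (h : Q.HasFactor l B) {f : A →ₗ[S] B} (hf : Function.Surjective f) :
    Q.HasFactor l A := by
  obtain ⟨φ, hφ⟩ := h
  obtain ⟨ψ, rfl⟩ := Module.projective_lifting_property f φ hf
  exact ⟨ψ, fun h0 => hφ (by rw [h0, LinearMap.comp_zero])⟩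

theorem left_or_right {f : A →ₗ[S] B} {g : B →ₗ[S] C} (h : IsShortExact f g)
    (hB : Q.HasFactor l B) : Q.HasFactor l A ∨ Q.HasFactor l C := by
  obtain ⟨φ, hφ⟩ := hB
  by_cases h0 : g ∘ₗ φ = 0
  · obtain ⟨ψ, rfl⟩ := h.exists_lift φ h0
    exact .inl ⟨ψ, fun hψ => hφ (by rw [hψ, LinearMap.comp_zero])⟩
  · exact .inr ⟨_, h0⟩

theorem self (l : Λ) : Q.HasFactor l (Q.L l) := by
  obtain ⟨π, hπ⟩ := Q.exists_isHead_proj l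
  exact ⟨π, LinearMap.ne_zero_of_surjective hπ.surjective⟩

theorem nonempty_equiv [IsSimpleModule S X] (h : Q.HasFactor l X) :
    Nonempty (X ≃ₗ[S] Q.L l) := by
  obtain ⟨φ, hφ⟩ := h
  obtain ⟨π, hπ⟩ := Q.exists_isHead_proj l
  have hφs : Function.Surjective φ := LinearMap.surjective_of_ne_zero hφ
  obtain ⟨ψ, rfl⟩ := (IsShortExact.ker_subtype hφs).exists_desc π <| by
    rw [← LinearMap.range_le_ker_iff, Submodule.range_subtype]
    exact hπ.ker_le hφ
  have hψ : ψ ≠ 0 := LinearMap.ne_zero_of_surjective (.of_comp hπ.surjective)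
  exact ⟨LinearEquiv.ofBijective ψ (LinearMap.bijective_of_ne_zero hψ)⟩

theorem eq_of_simple (h : Q.HasFactor l (Q.L m)) : l = m := by
  obtain ⟨e⟩ := h.nonempty_equiv
  by_contra hne
  exact (Q.nonisoL m l (Ne.symm hne)).false e

theorem of_subquot {A B : Submodule S X}
    (h : Q.HasFactor l (subquot S (M := .of S X) A B)) : Q.HasFactor l X :=
  (h.of_surjective (Submodule.mkQ_surjective _)).of_injective B.injective_subtype

end HasFactor

theorem hasFactor_iff_isCompFactor {l : Λ} :
    Q.HasFactor l X ↔ IsCompFactor S (Q.L l) (.of S X) := by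
  constructor
  · rintro ⟨φ, hφ⟩
    obtain ⟨π, hπ⟩ := Q.exists_isHead_proj l
    obtain ⟨ψ, rfl⟩ := hπ.exists_comp_rangeRestrict hφ
    refine ⟨(LinearMap.ker ψ).map (LinearMap.range φ).subtype, LinearMap.range φ,
      Submodule.map_subtype_le _ _, ⟨(Submodule.quotEquivOfEq _ _ ?_).trans
        (ψ.quotKerEquivOfSurjective (.of_comp hπ.surjective))⟩⟩
    exact Submodule.comap_map_eq_of_injective (Submodule.injective_subtype _) _
  · rintro ⟨A, B, -, ⟨e⟩⟩
    exact ((HasFactor.self l).of_injective e.symm.injective).of_subquot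

theorem hasFactor_subquot {l : Λ} {φ : Q.P l →ₗ[S] X} {A B : Submodule S X}
    (hB : LinearMap.range φ ≤ B) (hA : ¬LinearMap.range φ ≤ A) :
    Q.HasFactor l (subquot S (M := .of S X) A B) := by
  refine ⟨Submodule.mkQ _ ∘ₗ φ.codRestrict B fun x => hB ⟨x, rfl⟩, fun h => hA ?_⟩
  rintro _ ⟨x, rfl⟩
  simpa using congr($h x)

section Standard

variable {l m : Λ}

variable (Q) in
theorem exists_isHead_std (l : Λ) : ∃ (ρ : Q.P l →ₗ[S] Q.std l) (τ : Q.std l →ₗ[S] Q.L l),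
    Function.Surjective ρ ∧ IsHead τ := by
  obtain ⟨π, hπ⟩ := Q.exists_isHead_proj l
  obtain ⟨K, ⟨e⟩, -, hmin⟩ := Q.stdSpec l
  have hK : K ≤ LinearMap.ker π := hmin _ fun m hm =>
    ((hasFactor_iff_isCompFactor.2 hm).of_injective
      (π.quotKerEquivOfSurjective hπ.surjective).injective).eq_of_simple.le
  have hshort := (IsShortExact.subtype_mkQ K).comp_equiv e.symm
  obtain ⟨τ, rfl⟩ := hshort.exists_desc π <| by
    rwa [← LinearMap.range_le_ker_iff, Submodule.range_subtype]
  exact ⟨_, τ, hshort.surjective, hπ.of_comp hshort.surjective⟩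

instance finite_std (l : Λ) : Module.Finite S (Q.std l) := by
  obtain ⟨-, τ, -, hτ⟩ := Q.exists_isHead_std l
  exact hτ.finite

theorem HasFactor.le_of_std (h : Q.HasFactor m (Q.std l)) : m ≤ l := by
  obtain ⟨K, ⟨e⟩, hK, -⟩ := Q.stdSpec l
  exact hK m (hasFactor_iff_isCompFactor.1 (h.of_injective e.injective))

theorem eq_of_surjective_proj_std {w : Q.P l →ₗ[S] Q.std m} (hw : Function.Surjective w) :
    l = m := by
  obtain ⟨-, τ, -, hτ⟩ := Q.exists_isHead_std m
  exact HasFactor.eq_of_simple ⟨τ ∘ₗ w, LinearMap.ne_zero_of_surjective (hτ.surjective.comp hw)⟩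

theorem nonempty_subquot_equiv_of_le_ker {L : Type} [AddCommGroup L] [Module S L]
    [IsSimpleModule S L] {τ : X →ₗ[S] L} {A B : Submodule S X}
    [IsSimpleModule S (subquot S (M := .of S X) A B)] (hA : A ≤ LinearMap.ker τ)
    (hB : ¬B ≤ LinearMap.ker τ) : Nonempty (subquot S (M := .of S X) A B ≃ₗ[S] L) := by
  let ψ : subquot S (M := .of S X) A B →ₗ[S] L :=
    Submodule.liftQ _ (τ ∘ₗ B.subtype) fun x hx => hA hx
  have hψ : ψ ≠ 0 := fun h0 => hB fun x hx => congr($h0 (Submodule.Quotient.mk ⟨x, hx⟩))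
  exact ⟨.ofBijective ψ (LinearMap.bijective_of_ne_zero hψ)⟩

-- In a composition series of `Δ(l)`, the section where the image of `P(l) → ker τ` first appears
-- and the section on which `τ` is nonzero are both copies of `L(l)`. Multiplicity one forces them
-- to coincide, but a simple section cannot be covered by `ker τ` and also map onto `L(l)`.
theorem not_hasFactor_ker_of_isHead_std {τ : Q.std l →ₗ[S] Q.L l} (hτ : IsHead τ) :
    ¬Q.HasFactor l (LinearMap.ker τ) := by
  rintro ⟨φ, hφ⟩
  obtain ⟨n, F, hmono, hbot, htop, hsimple, hcard⟩ := Q.multOne l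
  have huniq := (Nat.card_eq_one_iff_unique.1 hcard).1
  let φ' : Q.P l →ₗ[S] Q.std l := (LinearMap.ker τ).subtype ∘ₗ φ
  have hφker : LinearMap.range φ' ≤ LinearMap.ker τ :=
    (LinearMap.range_comp_le_range _ _).trans (Submodule.range_subtype _).le
  obtain ⟨i, hi, hi'⟩ := exists_not_castSucc_and_succ (p := fun j => LinearMap.range φ' ≤ F j)
    (by
      rw [hbot, le_bot_iff, LinearMap.range_eq_bot]
      exact fun h0 => hφ ((LinearMap.cancel_left (Submodule.injective_subtype _)).1
        (h0.trans (LinearMap.comp_zero _).symm)))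
    (by simp [htop])
  obtain ⟨j, hj, hj'⟩ := exists_not_castSucc_and_succ (p := fun j => ¬F j ≤ LinearMap.ker τ)
    (by simp [hbot]) (by
      rw [htop, top_le_iff, LinearMap.ker_eq_top]
      exact LinearMap.ne_zero_of_surjective hτ.surjective)
  rw [not_not] at hj
  have hLi : Nonempty (subquot S (F i.castSucc) (F i.succ) ≃ₗ[S] Q.L l) :=
    have := hsimple i
    (hasFactor_subquot hi' hi).nonempty_equiv
  have hLj : Nonempty (subquot S (F j.castSucc) (F j.succ) ≃ₗ[S] Q.L l) :=
    have := hsimple j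
    nonempty_subquot_equiv_of_le_ker hj hj'
  obtain rfl : i = j := congrArg Subtype.val (huniq.elim ⟨i, hLi⟩ ⟨j, hLj⟩)
  have hcov : F i.castSucc ⋖ F i.succ :=
    (covBy_iff_quot_is_simple (hmono Fin.castSucc_lt_succ.le)).2 (hsimple i)
  have hsup : F i.castSucc ⊔ LinearMap.range φ' = F i.succ :=
    (hcov.eq_or_eq le_sup_left (sup_le hcov.le hi')).resolve_left fun h => hi (sup_eq_left.1 h)
  rw [← hsup] at hj'
  exact hj' (sup_le hj hφker)

variable (Q) in
theorem exists_presentation_std (l : Λ) :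
    ∃ (K : Submodule S (Q.P l)) (g : Q.P l →ₗ[S] Q.std l),
      IsShortExact K.subtype g ∧ Filtered Q.std (Set.Ioi l) K := by
  obtain ⟨n, F, c, hF, hle, hcard⟩ := Q.projFilt l
  obtain ⟨huniq, ⟨i, -⟩⟩ := Nat.card_eq_one_iff_unique.1 hcard
  obtain _ | n := n
  · exact i.elim0
  have hshort : ∃ g : Q.P l →ₗ[S] Q.std (c (Fin.last n)),
      IsShortExact (F (Fin.last n).castSucc).subtype g := hF.exists_isShortExact_subtype_last
  have hlast : c (Fin.last n) = l :=
    hshort.elim fun g hg => (eq_of_surjective_proj_std hg.surjective).symm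
  rw [hlast] at hshort
  obtain ⟨g, hg⟩ := hshort
  refine ⟨F (Fin.last n).castSucc, g, hg, ?_⟩
  refine .of_hasFiltrationWithSections hF _ fun j hj => (hle j).lt_of_ne' fun hjl => ?_
  have hjlast : j = Fin.last n := congrArg Subtype.val (huniq.elim ⟨j, hjl⟩ ⟨_, hlast⟩)
  exact hj.ne (congrArg Fin.castSucc hjlast)

end Standard

end QHData

end QuasiHereditary

/-! ### Costandard modules -/

section QuasiHereditary

variable {S : Type} [Ring S] {Λ : Type} [Fintype Λ] [PartialOrder Λ] {Q : QHData S Λ}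
variable {X Y : Type} [AddCommGroup X] [Module S X] [AddCommGroup Y] [Module S Y]

namespace Filtered

variable {ι : Type*} {D : ι → ModuleCat.{0} S} {s : Set ι} {n : ℕ}

theorem extVanishes_left (hX : Filtered D s X) (h : ∀ i ∈ s, ExtVanishes S n (D i) Y) :
    ExtVanishes S n X Y := by
  induction hX with
  | zero => exact .of_subsingleton_left n
  | step hi hs _ ih => exact .contravariant_middle hs ih (h _ hi)

theorem extVanishes_right (hX : Filtered D s X) (h : ∀ i ∈ s, ExtVanishes S n Y (D i)) :
    ExtVanishes S n Y X := by
  induction hX with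
  | zero => exact .of_subsingleton_right n
  | step hi hs _ ih => exact .covariant_middle hs ih (h _ hi)

end Filtered

namespace QHData

variable (Q) in
theorem filtered_L [IsArtinianRing S] [Module.Finite S X] :
    Filtered Q.L {l | Q.HasFactor l X} X := by
  have hX : IsFiniteLength S X :=
    isFiniteLength_iff_isNoetherian_isArtinian.2 ⟨inferInstance, inferInstance⟩
  induction hX with
  | of_subsingleton => exact .zero
  | @of_simple_quotient X _ _ N _ _ ih =>
    obtain ⟨l, ⟨e⟩⟩ := Q.exists_equiv_of_isSimpleModule (X ⧸ N)
    have hshort := (IsShortExact.subtype_mkQ N).comp_equiv e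
    exact .step ((HasFactor.self l).of_surjective hshort.surjective) hshort
      (ih.mono fun _ hm => hm.of_injective N.injective_subtype)

variable (Q) in
theorem exists_injective_L [IsArtinian S X] [Nontrivial X] :
    ∃ (l : Λ) (f : Q.L l →ₗ[S] X), Function.Injective f := by
  obtain ⟨N, hN, -⟩ := (eq_bot_or_exists_atom_le (⊤ : Submodule S X)).resolve_left top_ne_bot
  have : IsSimpleModule S N := isSimpleModule_iff_isAtom.2 hN
  obtain ⟨l, ⟨e⟩⟩ := Q.exists_equiv_of_isSimpleModule N
  exact ⟨l, N.subtype ∘ₗ e.symm.toLinearMap, N.injective_subtype.comp e.symm.injective⟩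

section Standard

variable {l : Λ}

theorem extVanishes_zero_std (h : ¬Q.HasFactor l X) : ExtVanishes S 0 (Q.std l) X := by
  obtain ⟨ρ, -, hρ, -⟩ := Q.exists_isHead_std l
  rw [extVanishes_zero_iff]
  intro φ
  have hφρ : φ ∘ₗ ρ = 0 := by_contra fun hne => h ⟨_, hne⟩
  exact (LinearMap.cancel_right hρ).1 (hφρ.trans (LinearMap.zero_comp ρ).symm)

theorem extVanishes_one_std (h : ∀ m, l < m → ¬Q.HasFactor m X) :
    ExtVanishes S 1 (Q.std l) X := by
  obtain ⟨K, g, hshort, hK⟩ := Q.exists_presentation_std l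
  exact .contravariant_right hshort
    (hK.extVanishes_left fun m hm => extVanishes_zero_std (h m hm)) (.of_projective 0)

end Standard

section Costandard

variable {l m : Λ}

variable (Q) in
theorem exists_isSocle_inj (m : Λ) : ∃ ι : Q.L m →ₗ[S] Q.I m, IsSocle ι := by
  obtain ⟨-, ι, hι, hess⟩ := Q.injHull m
  exact ⟨ι, .of_essential hι hess⟩

variable (Q) in
theorem exists_costd_embedding (m : Λ) : ∃ j : Q.costd m →ₗ[S] Q.I m, Function.Injective j ∧
    ∀ V : Submodule S (Q.I m), (∀ l, Q.HasFactor l V → l ≤ m) → V ≤ LinearMap.range j := by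
  obtain ⟨W, ⟨e⟩, -, hmax⟩ := Q.costdSpec m
  refine ⟨W.subtype ∘ₗ e.toLinearMap, W.injective_subtype.comp e.injective, fun V hV => ?_⟩
  rw [LinearMap.range_comp, LinearEquiv.range, Submodule.map_top, Submodule.range_subtype]
  exact hmax V fun l hl => hV l (hasFactor_iff_isCompFactor.2 hl)

theorem HasFactor.le_of_costd (h : Q.HasFactor l (Q.costd m)) : l ≤ m := by
  obtain ⟨W, ⟨e⟩, hW, -⟩ := Q.costdSpec m
  exact hW l (hasFactor_iff_isCompFactor.1 (h.of_injective e.injective))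

variable (Q) in
theorem exists_isSocle_costd (m : Λ) : ∃ σ : Q.L m →ₗ[S] Q.costd m, IsSocle σ := by
  obtain ⟨ι, hι⟩ := Q.exists_isSocle_inj m
  obtain ⟨j, hj, hmax⟩ := Q.exists_costd_embedding m
  have hle : LinearMap.range ι ≤ LinearMap.range j := hmax _ fun l hl =>
    (hl.of_surjective ι.surjective_rangeRestrict).eq_of_simple.le
  obtain ⟨σ, rfl⟩ := (IsShortExact.mkQ_range hj).exists_lift ι <| by
    rwa [← LinearMap.range_le_ker_iff, Submodule.ker_mkQ]
  exact ⟨σ, hι.of_comp hj⟩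

variable (Q) in
theorem finite_costd (k : Type*) [Field k] [Algebra k S] [FiniteDimensional k S] (m : Λ) :
    Module.Finite S (Q.costd m) := by
  have : IsNoetherianRing S := IsNoetherianRing.of_finite k S
  obtain ⟨-, ι, hι, hess⟩ := Q.injHull m
  have := Q.finiteL m
  have : Module.Finite S (Q.I m) := finite_of_essential k hι hess
  obtain ⟨j, hj, -⟩ := Q.exists_costd_embedding m
  exact Module.Finite.of_injective j hj

theorem extVanishes_one_costd (hX : ∀ l, Q.HasFactor l X → l ≤ m) :
    ExtVanishes S 1 X (Q.costd m) := by
  obtain ⟨j, hj, hmax⟩ := Q.exists_costd_embedding m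
  have hshort := IsShortExact.mkQ_range hj
  refine .covariant_left hshort (extVanishes_zero_iff.2 fun φ => ?_) (.of_injective 0)
  set N := LinearMap.range φ with hN
  -- The preimage `V` of `N` in `I(m)` has all its factors `≤ m`, hence lies in `∇(m)`.
  obtain ⟨u, v, huv⟩ := hshort.exists_ker_comp (IsShortExact.subtype_mkQ N)
  have hV := hmax _ fun l hl => (HasFactor.left_or_right huv hl).elim HasFactor.le_of_costd
    fun h => hX l (h.of_surjective φ.surjective_rangeRestrict)
  rw [← LinearMap.range_eq_bot, ← hN, eq_bot_iff]
  intro y hy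
  obtain ⟨x, rfl⟩ := hshort.surjective y
  have hx : x ∈ LinearMap.range j := hV ((Submodule.Quotient.mk_eq_zero N).2 hy)
  exact (Submodule.Quotient.mk_eq_zero _).2 hx

variable (Q) in
theorem extVanishes_one_std_costd (l m : Λ) : ExtVanishes S 1 (Q.std l) (Q.costd m) := by
  by_cases h : l < m
  · exact extVanishes_one_costd fun i hi => hi.le_of_std.trans h.le
  · exact extVanishes_one_std fun i hi hf => h (hi.trans_le hf.le_of_costd)

variable (Q) in
theorem extVanishes_two_std_costd (l m : Λ) : ExtVanishes S 2 (Q.std l) (Q.costd m) := by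
  obtain ⟨K, g, hshort, hK⟩ := Q.exists_presentation_std l
  exact .contravariant_right hshort
    (hK.extVanishes_left fun i _ => Q.extVanishes_one_std_costd i m) (.of_projective 1)

theorem comp_subtype_ker_eq_zero {τ : Q.std m →ₗ[S] Q.L m} (hτ : IsHead τ)
    (χ : Q.std m →ₗ[S] Q.costd m) : χ ∘ₗ (LinearMap.ker τ).subtype = 0 := by
  obtain ⟨σ, hσ⟩ := Q.exists_isSocle_costd m
  by_contra hne
  have hle := hσ.range_le (mt LinearMap.range_eq_bot.1 hne)
  have hrange : Q.HasFactor m (LinearMap.range (χ ∘ₗ (LinearMap.ker τ).subtype)) :=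
    (HasFactor.self m).of_injective (f := σ.codRestrict _ fun x => hle ⟨x, rfl⟩)
      fun x y hxy => hσ.injective congr(($hxy : Q.costd m))
  exact not_hasFactor_ker_of_isHead_std hτ
    (hrange.of_surjective (LinearMap.surjective_rangeRestrict _))

theorem range_le_range_of_isSocle_costd {σ : Q.L m →ₗ[S] Q.costd m} (hσ : IsSocle σ)
    (ψ : Q.P m →ₗ[S] Q.costd m) : LinearMap.range ψ ≤ LinearMap.range σ := by
  obtain ⟨K, g, hshort, hK⟩ := Q.exists_presentation_std m
  obtain ⟨-, τ, -, hτ⟩ := Q.exists_isHead_std m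
  have hψK : ψ ∘ₗ K.subtype = 0 := extVanishes_zero_iff.1
    (hK.extVanishes_left fun i (hi : m < i) =>
      extVanishes_zero_std fun h => hi.not_ge h.le_of_costd) _
  obtain ⟨χ, rfl⟩ := hshort.exists_desc ψ hψK
  obtain ⟨ω, rfl⟩ := (IsShortExact.ker_subtype hτ.surjective).exists_desc χ
    (comp_subtype_ker_eq_zero hτ χ)
  exact (LinearMap.range_comp_le_range _ _).trans
    ((LinearMap.range_comp_le_range _ _).trans (hσ.range_le_range ω))

theorem HasFactor.lt_of_costd_quotient {σ : Q.L m →ₗ[S] Q.costd m} (hσ : IsSocle σ)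
    (h : Q.HasFactor l (Q.costd m ⧸ LinearMap.range σ)) : l < m := by
  refine (h.of_surjective (Submodule.mkQ_surjective _)).le_of_costd.lt_of_ne ?_
  rintro rfl
  obtain ⟨φ, hφ⟩ := h
  obtain ⟨ψ, rfl⟩ := Module.projective_lifting_property _ φ (Submodule.mkQ_surjective _)
  refine hφ (LinearMap.range_le_ker_iff.1 ?_)
  rw [Submodule.ker_mkQ]
  exact range_le_range_of_isSocle_costd hσ ψ

theorem HasFactor.lt_of_ker_head {τ : Q.std m →ₗ[S] Q.L m} (hτ : IsHead τ)
    (h : Q.HasFactor l (LinearMap.ker τ)) : l < m := by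
  refine (h.of_injective (Submodule.injective_subtype _)).le_of_std.lt_of_ne ?_
  rintro rfl
  exact not_hasFactor_ker_of_isHead_std hτ h

end Costandard

end QHData

end QuasiHereditary

/-! ### Tilting modules -/

section CostandardCriterion

variable {S : Type} [Ring S] {Λ : Type} [Fintype Λ] [PartialOrder Λ] {Q : QHData S Λ}
variable {A B C X Y : Type} [AddCommGroup A] [Module S A] [AddCommGroup B] [Module S B]
  [AddCommGroup C] [Module S C] [AddCommGroup X] [Module S X] [AddCommGroup Y] [Module S Y]
variable {m : Λ}

theorem Filtered.finite [IsNoetherianRing S] {ι : Type*} {D : ι → ModuleCat.{0} S} {s : Set ι}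
    (hD : ∀ i, Module.Finite S (D i)) (hX : Filtered D s X) : Module.Finite S X := by
  induction hX with
  | zero => infer_instance
  | @step _ _ _ _ _ _ i _ _ _ h _ ih =>
    have := hD i
    exact h.finite

namespace QHData

theorem extVanishes_zero_of_forall_hasFactor [IsArtinianRing S] [Module.Finite S X]
    (hm : ∀ l, l < m → ¬∃ f : Q.L l →ₗ[S] Y, Function.Injective f)
    (hX : ∀ l, Q.HasFactor l X → l < m) : ExtVanishes S 0 X Y :=
  (Q.filtered_L (X := X)).extVanishes_left fun l hl => extVanishes_zero_iff.2 fun φ =>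
    φ.injective_or_eq_zero.resolve_left fun hφ => hm l (hX l hl) ⟨φ, hφ⟩

theorem extVanishes_one_of_forall_hasFactor [IsArtinianRing S] [Module.Finite S X]
    (hY : ∀ l, ExtVanishes S 1 (Q.std l) Y)
    (hm : ∀ l, l < m → ¬∃ f : Q.L l →ₗ[S] Y, Function.Injective f)
    (hX : ∀ l, Q.HasFactor l X → l < m) : ExtVanishes S 1 X Y := by
  refine (Q.filtered_L (X := X)).extVanishes_left fun l hl => ?_
  obtain ⟨-, τ, -, hτ⟩ := Q.exists_isHead_std l
  have hker : ExtVanishes S 0 (LinearMap.ker τ) Y :=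
    extVanishes_zero_of_forall_hasFactor hm fun i hi =>
      (HasFactor.lt_of_ker_head hτ hi).trans (hX l hl)
  exact .contravariant_right (.ker_subtype hτ.surjective) hker (hY l)

theorem exists_injective_costd [IsArtinianRing S] (hfin : ∀ l, Module.Finite S (Q.costd l))
    [Module.Finite S Y] [Nontrivial Y] (hY : ∀ l, ExtVanishes S 1 (Q.std l) Y) :
    ∃ (m : Λ) (f : Q.costd m →ₗ[S] Y), Function.Injective f := by
  obtain ⟨l, hl⟩ := Q.exists_injective_L (X := Y)
  obtain ⟨m, ⟨s, hs⟩, hmin⟩ := exists_minimal_of_wellFoundedLT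
    (fun l => ∃ f : Q.L l →ₗ[S] Y, Function.Injective f) ⟨l, hl⟩
  obtain ⟨σ, hσ⟩ := Q.exists_isSocle_costd m
  have := hfin m
  have hquot : ExtVanishes S 1 (Q.costd m ⧸ LinearMap.range σ) Y :=
    extVanishes_one_of_forall_hasFactor hY (fun l hl hf => hl.not_ge (hmin hf hl.le))
      fun l => HasFactor.lt_of_costd_quotient hσ
  obtain ⟨ψ, rfl⟩ := ExtVanishes.exists_extension (.mkQ_range hσ.injective) hquot s
  exact ⟨m, ψ, hσ.injective_of_comp hs⟩

theorem filtered_costd_of_extVanishes [IsArtinianRing S]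
    (hfin : ∀ l, Module.Finite S (Q.costd l)) [Module.Finite S Y]
    (hY : ∀ l, ExtVanishes S 1 (Q.std l) Y) : Filtered Q.costd Set.univ Y := by
  induction hlen : Module.length S Y using WellFoundedLT.induction generalizing Y with
  | ind n ih =>
  rcases subsingleton_or_nontrivial Y with _ | _
  · exact .zero
  obtain ⟨m, ψ, hψ⟩ := exists_injective_costd hfin hY
  have hshort := IsShortExact.mkQ_range hψ
  have hrange : LinearMap.range ψ ≠ ⊥ := by
    obtain ⟨σ, hσ⟩ := Q.exists_isSocle_costd m
    have := hσ.injective.nontrivial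
    exact mt LinearMap.range_eq_bot.1 (LinearMap.ne_zero_of_injective hψ)
  refine .of_isShortExact hshort (.single (Set.mem_univ m)) (ih _ ?_
    (fun l => .covariant_right hshort (hY l) (Q.extVanishes_two_std_costd l m)) rfl)
  rw [← hlen]
  exact Submodule.length_quotient_lt _ hrange

theorem filtered_costd_right [IsArtinianRing S] (hfin : ∀ l, Module.Finite S (Q.costd l))
    {f : A →ₗ[S] B} {g : B →ₗ[S] C} (h : IsShortExact f g) (hA : Filtered Q.costd Set.univ A)
    (hB : Filtered Q.costd Set.univ B) : Filtered Q.costd Set.univ C := by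
  have := hB.finite hfin
  have := Module.Finite.of_surjective g h.surjective
  exact filtered_costd_of_extVanishes hfin fun l => .covariant_right h
    (hB.extVanishes_right fun m _ => Q.extVanishes_one_std_costd l m)
    (hA.extVanishes_right fun m _ => Q.extVanishes_two_std_costd l m)

end QHData

end CostandardCriterion

section TiltingEmbedding

variable {S : Type} [Ring S] {Λ : Type} [Fintype Λ] [PartialOrder Λ] {Q : QHData S Λ}
variable {A B C X : Type} [AddCommGroup A] [Module S A] [AddCommGroup B] [Module S B]
  [AddCommGroup C] [Module S C] [AddCommGroup X] [Module S X]

theorem Filtered.pi {ι : Type*} {D : ι → ModuleCat.{0} S} {s : Set ι} {i : ι} (hi : i ∈ s) :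
    ∀ n : ℕ, Filtered D s (Fin n → D i)
  | 0 => .zero
  | n + 1 => (Filtered.step hi (.inr_fst S (D i) (Fin n → D i)) (.pi hi n)).equiv
      (Fin.consLinearEquiv S fun _ => D i)

theorem finite_linearMap (k : Type*) [Field k] [Algebra k S] [FiniteDimensional k S] [Module k A]
    [IsScalarTower k S A] [Module k X] [IsScalarTower k S X] [Module.Finite S A]
    [Module.Finite S X] : Module.Finite k (A →ₗ[S] X) :=
  have : Module.Finite k A := .trans S A
  have : Module.Finite k X := .trans S X
  .of_injective (LinearMap.restrictScalarsₗ k S A X k) (LinearMap.restrictScalars_injective k)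

-- The pushout of `0 → Aⁿ → Bⁿ → Cⁿ → 0` along `n` maps `A → X` spanning `Hom(A, X)` is the
-- universal extension of copies of `C` by `X`: every map `A → X` extends to `B` inside it.
theorem IsShortExact.exists_universal_extension (k : Type*) [Field k] [Algebra k S] [Module k A]
    [IsScalarTower k S A] [Module k B] [IsScalarTower k S B] [Module k X] [IsScalarTower k S X]
    [Module.Finite k (A →ₗ[S] X)] {f : A →ₗ[S] B} {g : B →ₗ[S] C} (h : IsShortExact f g)
    [Module.Projective S B] (hAC : ExtVanishes S 0 A C) :
    ∃ (n : ℕ) (E : ModuleCat.{0} S) (v : X →ₗ[S] E) (q : E →ₗ[S] (Fin n → C)),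
      IsShortExact v q ∧ ExtVanishes S 1 C E := by
  obtain ⟨n, b, hspan⟩ := Module.Finite.exists_fin (R := k) (M := A →ₗ[S] X)
  let i := f.compLeft (Fin n)
  let j : (Fin n → A) →ₗ[S] X := ∑ t, b t ∘ₗ LinearMap.proj t
  obtain ⟨q, -, hE⟩ := Pushout.isShortExact_inr (j := j) (h.compLeft (Fin n))
  refine ⟨n, .of S (Pushout i j), Pushout.inr i j, q, hE,
    .of_exists_extension h (.of_projective 0) fun φ => ?_⟩
  have hφ : q ∘ₗ φ = 0 := by
    ext a t
    exact congr($(extVanishes_zero_iff.1 hAC (LinearMap.proj t ∘ₗ q ∘ₗ φ)) a)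
  obtain ⟨ψ, rfl⟩ := hE.exists_lift φ hφ
  obtain ⟨c, rfl⟩ := (Submodule.mem_span_range_iff_exists_fun k).1
    (hspan ▸ Submodule.mem_top : ψ ∈ Submodule.span k (Set.range b))
  refine ⟨Pushout.inl i j ∘ₗ LinearMap.pi fun t => c t • LinearMap.id, LinearMap.ext fun a =>
    Pushout.inl_eq_inr_iff.2 ⟨fun t => c t • a, ?_, ?_⟩⟩
  · ext t
    simp [i]
  · simp [j]

namespace QHData

variable (Q) in
theorem exists_universal_extension_std (k : Type*) [Field k] [Algebra k S] [FiniteDimensional k S]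
    (X : Type) [AddCommGroup X] [Module S X] [Module.Finite S X] (l : Λ) :
    ∃ (E C : ModuleCat.{0} S) (v : X →ₗ[S] E) (q : E →ₗ[S] C),
      IsShortExact v q ∧ Filtered Q.std {l} C ∧ ExtVanishes S 1 (Q.std l) E := by
  have : IsNoetherianRing S := .of_finite k S
  obtain ⟨K, g, hshort, hK⟩ := Q.exists_presentation_std l
  let : Module k X := .compHom _ (algebraMap k S)
  have : IsScalarTower k S X := ⟨fun c s x => by rw [Algebra.smul_def, mul_smul]; rfl⟩
  let : Module k (Q.P l) := .compHom _ (algebraMap k S)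
  have : IsScalarTower k S (Q.P l) := ⟨fun c s x => by rw [Algebra.smul_def, mul_smul]; rfl⟩
  have : Module.Finite k (K →ₗ[S] X) := finite_linearMap k
  have hHom : ExtVanishes S 0 K (Q.std l) :=
    hK.extVanishes_left fun m (hm : l < m) => extVanishes_zero_std fun h => hm.not_ge h.le_of_std
  obtain ⟨n, E, v, q, hE, hExt⟩ := hshort.exists_universal_extension k (X := X) hHom
  exact ⟨E, .of S (Fin n → Q.std l), v, q, hE, .pi (Set.mem_singleton l) n, hExt⟩

-- Universal extensions by `Δ(l)` kill `Ext¹(Δ(l), -)`. Treating the maximal remaining `l` first,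
-- the later steps create no new extensions with `Δ(l)`.
variable (Q) in
theorem exists_embedding_extVanishes (k : Type*) [Field k] [Algebra k S] [FiniteDimensional k S]
    (V : Finset Λ) (hV : IsLowerSet (V : Set Λ)) (X : Type) [AddCommGroup X] [Module S X]
    [Module.Finite S X] (hX : ∀ m ∉ V, ExtVanishes S 1 (Q.std m) X) :
    ∃ (T C : ModuleCat.{0} S) (f : X →ₗ[S] T) (g : T →ₗ[S] C), IsShortExact f g ∧
      Filtered Q.std Set.univ C ∧ ∀ m, ExtVanishes S 1 (Q.std m) T := by
  classical
  have : IsNoetherianRing S := .of_finite k S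
  induction V using Finset.strongInduction generalizing X with
  | H V ih =>
  obtain rfl | hne := V.eq_empty_or_nonempty
  · exact ⟨.of S X, .of S PUnit, LinearMap.id, 0, ⟨Function.injective_id,
      (LinearMap.exact_zero_iff_surjective _ _).2 Function.surjective_id,
      Function.surjective_to_subsingleton _⟩, .zero, fun m => hX m (Finset.notMem_empty m)⟩
  obtain ⟨l, hl, hmax⟩ := V.exists_maximal hne
  obtain ⟨E, C, v, q, hE, hC, hExt⟩ := Q.exists_universal_extension_std k X l
  have := hC.finite finite_std
  have := hE.finite
  have hlower : IsLowerSet (V.erase l : Set Λ) := by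
    rw [Finset.coe_erase]
    exact hV.erase fun m hm hlm => (hmax hm hlm).antisymm hlm
  have hEm (m) (hm : m ∉ V.erase l) : ExtVanishes S 1 (Q.std m) E := by
    obtain rfl | hml := eq_or_ne m l
    · exact hExt
    have hmV : m ∉ V := fun h => hm (Finset.mem_erase.2 ⟨hml, h⟩)
    refine .covariant_middle hE (hX m hmV) (hC.extVanishes_right ?_)
    rintro _ rfl
    exact extVanishes_one_std fun i hi hf => hmV (hV (hi.le.trans hf.le_of_std) hl)
  obtain ⟨T, C', f, g, hT, hC', hTm⟩ := ih _ (Finset.erase_ssubset hl) hlower E hEm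
  obtain ⟨d, -, hd⟩ := Pushout.isShortExact_inr (j := q) hT
  exact ⟨T, .of S (Pushout f q), _, _, Pushout.isShortExact_comp_inl hE hT.injective,
    .of_isShortExact hd (hC.mono (Set.subset_univ _)) hC', hTm⟩

variable (Q) in
theorem exists_tilting_embedding (k : Type*) [Field k] [Algebra k S] [FiniteDimensional k S]
    (hX : Filtered Q.std Set.univ X) :
    ∃ (T C : ModuleCat.{0} S) (f : X →ₗ[S] T) (g : T →ₗ[S] C), IsShortExact f g ∧
      Filtered Q.std Set.univ C ∧ Filtered Q.std Set.univ T ∧ Filtered Q.costd Set.univ T := by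
  have : IsNoetherianRing S := .of_finite k S
  have : IsArtinianRing S := .of_finite k S
  have := hX.finite finite_std
  obtain ⟨T, C, f, g, h, hC, hT⟩ := Q.exists_embedding_extVanishes k Finset.univ
    (by simpa using isLowerSet_univ) X (by simp)
  have := hC.finite finite_std
  have := h.finite
  exact ⟨T, C, f, g, h, hC, .of_isShortExact h hX hC,
    filtered_costd_of_extVanishes (Q.finite_costd k) hT⟩

end QHData

end TiltingEmbedding

/-! ### Resolutions -/

section ProjectiveResolution

/-- Finiteness of the projective dimension of a module. Unlike Mathlib's `projectiveDimension` it is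
stated for unbundled modules, so that it applies to kernels and quotients directly. -/
def HasFiniteProjDim (R : Type u) [Ring R] (M : Type u) [AddCommGroup M] [Module R M] : Prop :=
  ∃ n : ℕ, HasProjectiveDimensionLT (ModuleCat.of R M) n

namespace HasFiniteProjDim

variable {R : Type u} [Ring R] {A B C M : Type u} [AddCommGroup A] [Module R A] [AddCommGroup B]
  [Module R B] [AddCommGroup C] [Module R C] [AddCommGroup M] [Module R M] {ι : Type*}
  {f : A →ₗ[R] B} {g : B →ₗ[R] C}

theorem of_subsingleton [Subsingleton M] : HasFiniteProjDim R M :=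
  ⟨0, (ModuleCat.isZero_of_subsingleton (.of R M)).hasProjectiveDimensionLT_zero⟩

theorem of_projective [Module.Projective R M] : HasFiniteProjDim R M :=
  have : Projective (ModuleCat.of R M) := (IsProjective.iff_projective M).1 inferInstance
  ⟨1, inferInstance⟩

theorem middle (h : IsShortExact f g) (hA : HasFiniteProjDim R A) (hC : HasFiniteProjDim R C) :
    HasFiniteProjDim R B := by
  obtain ⟨a, ha⟩ := hA
  obtain ⟨c, hc⟩ := hC
  exact ⟨max a c, h.shortExact.hasProjectiveDimensionLT_X₂ _
    (hasProjectiveDimensionLT_of_ge _ a _ (le_max_left a c))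
    (hasProjectiveDimensionLT_of_ge _ c _ (le_max_right a c))⟩

theorem right (h : IsShortExact f g) (hA : HasFiniteProjDim R A) (hB : HasFiniteProjDim R B) :
    HasFiniteProjDim R C := by
  obtain ⟨a, ha⟩ := hA
  obtain ⟨b, hb⟩ := hB
  exact ⟨max a b + 1, h.shortExact.hasProjectiveDimensionLT_X₃ _
    (hasProjectiveDimensionLT_of_ge _ a _ (le_max_left a b))
    (hasProjectiveDimensionLT_of_ge _ b _ ((le_max_right a b).trans (Nat.le_succ _)))⟩

theorem of_filtered {D : ι → ModuleCat.{u} R} {s : Set ι} (hD : ∀ i ∈ s, HasFiniteProjDim R (D i))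
    (hM : Filtered D s M) : HasFiniteProjDim R M := by
  induction hM with
  | zero => exact of_subsingleton
  | step hi h _ ih => exact middle h ih (hD _ hi)

end HasFiniteProjDim

theorem resolves_of_hasProjectiveDimensionLT {S : Type} [Ring S] [IsNoetherianRing S]
    {K : ModuleCat.{0} S → Prop}
    (hK : ∀ P : ModuleCat.{0} S, Module.Finite S P → Module.Projective S P → K P) {n : ℕ}
    {M : ModuleCat.{0} S} [Module.Finite S M] (hM : HasProjectiveDimensionLT M (n + 1)) :
    Resolves K n M := by
  induction n generalizing M with
  | zero =>
    exact hK M ‹_›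
      ((IsProjective.iff_projective M).2 (projective_iff_hasProjectiveDimensionLT_one.2 hM))
  | succ n ih =>
    obtain ⟨m, g, hg⟩ := Module.Finite.exists_fin' S M
    have h := IsShortExact.ker_subtype hg
    have hfree : Projective (ModuleCat.of S (Fin m → S)) :=
      (IsProjective.iff_projective _).1 inferInstance
    exact ⟨.of S (LinearMap.ker g), .of S (Fin m → S), _, g, h, hK _ inferInstance inferInstance,
      ih ((h.shortExact.hasProjectiveDimensionLT_X₃_iff n hfree).1 hM)⟩

end ProjectiveResolution

section StandardResolution

variable {S : Type} [Ring S] {Λ : Type} [Fintype Λ] [PartialOrder Λ] {Q : QHData S Λ}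
variable {X : Type} [AddCommGroup X] [Module S X]

namespace QHData

theorem hasFiniteProjDim_std (l : Λ) : HasFiniteProjDim S (Q.std l) := by
  induction l using WellFoundedGT.induction with
  | ind l ih =>
    obtain ⟨K, g, h, hK⟩ := Q.exists_presentation_std l
    exact .right h (.of_filtered ih hK) .of_projective

variable (Q) in
theorem hasFiniteProjDim_L [IsArtinianRing S] (l : Λ) : HasFiniteProjDim S (Q.L l) := by
  induction l using WellFoundedLT.induction with
  | ind l ih =>
    obtain ⟨-, τ, -, hτ⟩ := Q.exists_isHead_std l
    exact .right (.ker_subtype hτ.surjective)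
      (.of_filtered (fun m hm => ih m (HasFactor.lt_of_ker_head hτ hm)) Q.filtered_L)
      (hasFiniteProjDim_std l)

theorem hasFiniteProjDim (Q : QHData S Λ) (X : Type) [AddCommGroup X] [Module S X]
    [IsArtinianRing S] [Module.Finite S X] : HasFiniteProjDim S X :=
  .of_filtered (fun l _ => Q.hasFiniteProjDim_L l) Q.filtered_L

variable (Q) in
theorem exists_surjective_proj [Module.Finite S X] [Module.Projective S X] [Nontrivial X] :
    ∃ (l : Λ) (φ : X →ₗ[S] Q.P l), Function.Surjective φ := by
  obtain ⟨N, hN, -⟩ := (eq_top_or_exists_le_coatom (⊥ : Submodule S X)).resolve_left bot_ne_top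
  have := isSimpleModule_iff_isCoatom.2 hN
  obtain ⟨l, ⟨e⟩⟩ := Q.exists_equiv_of_isSimpleModule (X ⧸ N)
  obtain ⟨π, hπ⟩ := Q.exists_isHead_proj l
  obtain ⟨φ, hφ⟩ := Module.projective_lifting_property π (e.toLinearMap ∘ₗ N.mkQ) hπ.surjective
  have hsurj : Function.Surjective (π ∘ₗ φ) := hφ ▸ e.surjective.comp N.mkQ_surjective
  refine ⟨l, φ, LinearMap.range_eq_top.1 ?_⟩
  by_contra hrange
  exact LinearMap.ne_zero_of_surjective hsurj (LinearMap.range_le_ker_iff.1 (hπ.le_ker hrange))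

theorem filtered_proj (l : Λ) : Filtered Q.std Set.univ (Q.P l) := by
  obtain ⟨K, g, h, hK⟩ := Q.exists_presentation_std l
  exact .of_isShortExact h (hK.mono (Set.subset_univ _)) (.single (Set.mem_univ l))

theorem filtered_std_of_projective [IsArtinianRing S] [Module.Finite S X]
    [Module.Projective S X] : Filtered Q.std Set.univ X := by
  induction hlen : Module.length S X using WellFoundedLT.induction generalizing X with
  | ind n ih =>
  rcases subsingleton_or_nontrivial X with _ | _
  · exact .zero
  obtain ⟨l, φ, hφ⟩ := Q.exists_surjective_proj (X := X)
  have := (IsShortExact.ker_subtype hφ).projective_left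
  have hker : LinearMap.ker φ ≠ ⊤ := by
    obtain ⟨π, hπ⟩ := Q.exists_isHead_proj l
    have := hπ.surjective.nontrivial
    exact mt LinearMap.ker_eq_top.1 (LinearMap.ne_zero_of_surjective hφ)
  exact .of_isShortExact (.ker_subtype hφ) (ih _ (hlen ▸ Submodule.length_lt hker) rfl)
    (filtered_proj l)

variable (Q) in
theorem exists_resolves_std [IsArtinianRing S] (M : ModuleCat.{0} S) [Module.Finite S M] :
    ∃ d, Resolves (fun X => Filtered Q.std Set.univ X) d M := by
  obtain ⟨n, hn⟩ := Q.hasFiniteProjDim M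
  have hn' : HasProjectiveDimensionLT M n := hn
  exact ⟨n, resolves_of_hasProjectiveDimensionLT (fun _ _ _ => filtered_std_of_projective)
    (hasProjectiveDimensionLT_of_ge M n (n + 1) n.le_succ)⟩

end QHData

end StandardResolution

section AuslanderBuchweitz

variable {S : Type} [Ring S] {K W Y : ModuleCat.{0} S → Prop} {d : ℕ} {M : ModuleCat.{0} S}

theorem Resolves.exists_embedding
    (hext : ∀ {A B C : ModuleCat.{0} S} {f : A →ₗ[S] B} {g : B →ₗ[S] C},
      IsShortExact f g → K A → K C → K B)
    (hemb : ∀ X, K X → ∃ (T C : ModuleCat.{0} S) (f : X →ₗ[S] T) (g : T →ₗ[S] C),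
      IsShortExact f g ∧ K C ∧ W T)
    (hM : Resolves K d M) :
    ∃ (M' C : ModuleCat.{0} S) (f : M →ₗ[S] M') (g : M' →ₗ[S] C),
      IsShortExact f g ∧ K C ∧ Resolves W d M' := by
  induction d generalizing M with
  | zero => exact hemb M hM
  | succ d ih =>
    obtain ⟨B, A, f, g, hA, hKA, hB⟩ := hM
    obtain ⟨B', C, u, v, hB', hKC, hres⟩ := ih hB
    obtain ⟨p, hp⟩ := Pushout.isShortExact_inl (i := f) hB'
    obtain ⟨q, -, hq⟩ := Pushout.isShortExact_inr (j := u) hA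
    obtain ⟨T, C', r, s, hT, hKC', hWT⟩ := hemb (.of S (Pushout f u)) (hext hp hKA hKC)
    obtain ⟨e, -, he⟩ := Pushout.isShortExact_inr (j := q) hT
    exact ⟨.of S (Pushout r q), C', _, e, he, hKC', B', T, _, _,
      Pushout.isShortExact_comp_inl hq hT.injective, hWT, hres⟩

theorem Resolves.of_closedUnderCokernels
    (hY : ∀ {A B C : ModuleCat.{0} S} {f : A →ₗ[S] B} {g : B →ₗ[S] C},
      IsShortExact f g → Y A → Y B → Y C)
    (hM : Resolves Y d M) : Y M := by
  induction d generalizing M with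
  | zero => exact hM
  | succ d ih =>
    obtain ⟨B, A, f, g, h, hA, hB⟩ := hM
    exact hY h (ih hB) hA

theorem Resolves.and_of_closedUnderCokernels
    (hK : ∀ {A B C : ModuleCat.{0} S} {f : A →ₗ[S] B} {g : B →ₗ[S] C},
      IsShortExact f g → K A → K C → K B)
    (hY : ∀ {A B C : ModuleCat.{0} S} {f : A →ₗ[S] B} {g : B →ₗ[S] C},
      IsShortExact f g → Y A → Y C → Y B)
    (hY' : ∀ {A B C : ModuleCat.{0} S} {f : A →ₗ[S] B} {g : B →ₗ[S] C},
      IsShortExact f g → Y A → Y B → Y C)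
    (hemb : ∀ X, K X → ∃ (T C : ModuleCat.{0} S) (f : X →ₗ[S] T) (g : T →ₗ[S] C),
      IsShortExact f g ∧ K C ∧ K T ∧ Y T)
    (hYM : Y M) (hM : Resolves K d M) : Resolves (fun X => K X ∧ Y X) d M := by
  cases d with
  | zero => exact ⟨hM, hYM⟩
  | succ d =>
    obtain ⟨B, A, f, g, hA, hKA, hB⟩ := hM
    obtain ⟨B', C, u, v, hB', hKC, hres⟩ := hB.exists_embedding (W := fun X => K X ∧ Y X) hK hemb
    obtain ⟨p, hp⟩ := Pushout.isShortExact_inl (i := f) hB'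
    obtain ⟨q, -, hq⟩ := Pushout.isShortExact_inr (j := u) hA
    have hYB' : Y B' := (hres.mono fun _ h => h.2).of_closedUnderCokernels hY'
    exact ⟨B', .of S (Pushout f u), _, q, hq, ⟨hK hp hKA hKC, hY hq hYB' hYM⟩, hres⟩

end AuslanderBuchweitz

section TiltingResolution

variable {S : Type} [Ring S] {Λ : Type} [Fintype Λ] [PartialOrder Λ] {Q : QHData S Λ} {d : ℕ}
  {M : ModuleCat.{0} S}

theorem wfdLE_iff :
    WfdLE S Q M d ↔ Resolves (fun X => Filtered Q.std Set.univ X) d M := by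
  rw [resolves_iff Filtered.equiv]
  simp only [WfdLE, InStdFilt, filtered_univ_iff]

theorem tiltResLE_iff : TiltResLE S Q M d ↔
    Resolves (fun X => Filtered Q.std Set.univ X ∧ Filtered Q.costd Set.univ X) d M := by
  rw [resolves_iff fun h e => ⟨h.1.equiv e, h.2.equiv e⟩]
  simp only [TiltResLE, IsTilting, InStdFilt, InCostdFilt, filtered_univ_iff]

theorem TiltResLE.wfdLE (h : TiltResLE S Q M d) : WfdLE S Q M d :=
  wfdLE_iff.2 ((tiltResLE_iff.1 h).mono fun _ hX => hX.1)

theorem WfdLE.tiltResLE (k : Type*) [Field k] [Algebra k S] [FiniteDimensional k S]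
    (hM : Filtered Q.costd Set.univ M) (h : WfdLE S Q M d) : TiltResLE S Q M d :=
  have : IsArtinianRing S := .of_finite k S
  tiltResLE_iff.2 <| (wfdLE_iff.1 h).and_of_closedUnderCokernels
    Filtered.of_isShortExact Filtered.of_isShortExact
    (QHData.filtered_costd_right (Q.finite_costd k))
    (fun _ hX => Q.exists_tilting_embedding k hX) hM

end TiltingResolution

end QHPaper

open QHPaper in
theorem stmt10_general (k S Λ : Type) [Field k] [Ring S] [Algebra k S] [FiniteDimensional k S]
    [Fintype Λ] [PartialOrder Λ] (QH : QHData S Λ) (M : ModuleCat.{0} S)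
    (hM : InCostdFilt S QH M) :
    (∃ d : ℕ, TiltResLE S QH M d) ∧ sInf {d : ℕ | TiltResLE S QH M d} = wfd S QH M := by
  have : IsArtinianRing S := .of_finite k S
  have hfilt : Filtered QH.costd Set.univ M := filtered_univ_iff.2 hM
  have : Module.Finite S M := hfilt.finite (QH.finite_costd k)
  have hiff (d : ℕ) : TiltResLE S QH M d ↔ WfdLE S QH M d :=
    ⟨TiltResLE.wfdLE, WfdLE.tiltResLE k hfilt⟩
  obtain ⟨d, hd⟩ := QH.exists_resolves_std M
  exact ⟨⟨d, (hiff d).2 (wfdLE_iff.2 hd)⟩, by simp only [hiff, wfd]⟩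

open QHPaper in
/-- Let `S` be a quasi-hereditary algebra and `lam ∈ Λ⁺`. The least length
`d` of a tilting resolution `0 → T_d → ⋯ → T_1 → T_0 → ∇(lam) → 0` of the costandard
module `∇(lam)` (with every `T_i` a tilting module) exists and equals the Δ-filtration
dimension `wfd(∇(lam))`. -/
theorem stmt10 (k S Λ : Type) [Field k] [Ring S] [Algebra k S] [FiniteDimensional k S]
    [Fintype Λ] [PartialOrder Λ]
    (QH : QHData S Λ) (lam : Λ) :
    (∃ d : ℕ, TiltResLE S QH (QH.costd lam) d) ∧
    sInf {d : ℕ | TiltResLE S QH (QH.costd lam) d} = wfd S QH (QH.costd lam) :=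
  stmt10_general k S Λ QH _ (filtered_univ_iff.1 (.single (Set.mem_univ lam)))
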